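/- arXiv:2209.10377 — 4 statements merged into one kernel-verified Lean document; each statement's English description precedes it below -/
import Mathlib

section
/- Let x be one of the frame conditions D, T, B, 4, 5, let A ⊆ Ag, and let L1, L2 be logics such that L1(α) = L2(α) ∪ {x} for α ∈ A and L1(α) = L2(α) otherwise, where every condition in every set L2(α) strictly precedes x in the linear order D, T, B, 4, 5. Then a recursion-free formula φ is L1-satisfiable if and only if τ^x_A(φ) = φ ∧ Inv_d(⋀_{ψ ∈ s̄ub(φ), α ∈ A} ax^x_α[ψ/p]) is L2-satisfiable, where d = md(φ) if x ≠ 4 and d = md(φ)·|φ| if x = 4. -/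
/-!
Left to right, the axiom of `x` is valid on frames satisfying `x` (`axAt_of_holds`), so a model of
`L1` for `φ` already satisfies the translation.

Right to left, let `M` be a model of `L2` in which `φ` and the axiom instances up to distance `d`
hold at `s`. A new model is built from states of `M` carrying a budget `k`, the modal depth that
still has to be preserved, subject to the axioms holding up to a distance that depends on `k`
(`Safe`). By `transfer`, `φ` remains true provided that along new edges the bodies of true boxes are
true within the budget (`BoxOK`) and true diamonds have witnesses within the budget (`DiaOK`). It
remains to choose relations with these properties satisfying the conditions of `L1`.

* `D`, `T`, `B`: edges of `M` are kept when the budget changes by at most one, and exhausted states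
  get loops. For `T` loops and for `B` reversed edges are added; the axioms make this harmless.
* `4`: as in the Lemmon filtration, `σ` sees `σ'` when the boxes of `σ` hold, with their bodies, at
  `σ'` (`rel4`), the two having the same level; the level is the budget, or one more than the budget
  for a state entered along an edge of the agent, so it does not decrease along a chain. Box sets
  grow along edges of the agent and have fewer than `|φ|` elements (`card_Bs_lt`). While the box set
  does not change, diamonds are realised by successors of one fixed anchor (`step4`), so each unit of
  modal depth consumes at most `|φ|` steps of `M`, which is where the bound `md φ * |φ|` comes from.
* `5`: the instances for the body of a box and for the dual diamond force all successors of an entry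
  state `e`, and all their successors, to have the same box set (`five_sibling`, `five_succ`). Hence
  the cluster entered from `e` can be made of successors and second successors of `e` alone
  (`dia5_cluster`), within distance two of `e`. Under `T` or `B` the state `e` belongs to the
  cluster, and under `T`, `B` or `4` first successors suffice. Agents outside `A` that are transitive
  keep the edges of `M` between states of equal level (`relTrans`).
-/

set_option linter.unusedVariables false

/-- Formulas of the multi-modal μ-calculus in negation normal form. -/
inductive Formula (Ag PVar LVar : Type) : Type
  | prop  : PVar → Formula Ag PVar LVar
  | nprop : PVar → Formula Ag PVar LVar
  | tt    : Formula Ag PVar LVar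
  | ff    : Formula Ag PVar LVar
  | var   : LVar → Formula Ag PVar LVar
  | and   : Formula Ag PVar LVar → Formula Ag PVar LVar → Formula Ag PVar LVar
  | or    : Formula Ag PVar LVar → Formula Ag PVar LVar → Formula Ag PVar LVar
  | dia   : Ag → Formula Ag PVar LVar → Formula Ag PVar LVar
  | box   : Ag → Formula Ag PVar LVar → Formula Ag PVar LVar
  | mu    : LVar → Formula Ag PVar LVar → Formula Ag PVar LVar
  | nu    : LVar → Formula Ag PVar LVar → Formula Ag PVar LVar
  deriving DecidableEq

/-- A Kripke model over agents `Ag`, propositional variables `PVar`, states `W`. -/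
structure Kripke (Ag PVar W : Type) where
  R : Ag → W → W → Prop
  V : W → Set PVar

variable {Ag PVar LVar W : Type}

/-- The semantics `⟦φ⟧_ρ ⊆ W`. -/
def sem [DecidableEq LVar] (M : Kripke Ag PVar W) :
    (LVar → Set W) → Formula Ag PVar LVar → Set W
  | _, .prop p  => {s | p ∈ M.V s}
  | _, .nprop p => {s | p ∉ M.V s}
  | _, .tt      => Set.univ
  | _, .ff      => ∅
  | ρ, .var X   => ρ X
  | ρ, .and φ ψ => sem M ρ φ ∩ sem M ρ ψ
  | ρ, .or φ ψ  => sem M ρ φ ∪ sem M ρ ψ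
  | ρ, .box α φ => {s | ∀ t, M.R α s t → t ∈ sem M ρ φ}
  | ρ, .dia α φ => {s | ∃ t, M.R α s t ∧ t ∈ sem M ρ φ}
  | ρ, .mu X φ  => ⋂₀ {S | sem M (Function.update ρ X S) φ ⊆ S}
  | ρ, .nu X φ  => ⋃₀ {S | S ⊆ sem M (Function.update ρ X S) φ}

/-- Free logical variables of a formula. -/
def freeVars : Formula Ag PVar LVar → Set LVar
  | .prop _  => ∅
  | .nprop _ => ∅
  | .tt      => ∅
  | .ff      => ∅
  | .var X   => {X}
  | .and φ ψ => freeVars φ ∪ freeVars ψ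
  | .or φ ψ  => freeVars φ ∪ freeVars ψ
  | .dia _ φ => freeVars φ
  | .box _ φ => freeVars φ
  | .mu X φ  => freeVars φ \ {X}
  | .nu X φ  => freeVars φ \ {X}

/-- A formula is closed when it has no free variable occurrences. -/
def Closed (φ : Formula Ag PVar LVar) : Prop := freeVars φ = ∅

/-- All logical variables (free or bound) occurring in a formula. -/
def vars : Formula Ag PVar LVar → Set LVar
  | .prop _  => ∅
  | .nprop _ => ∅
  | .tt      => ∅
  | .ff      => ∅
  | .var X   => {X}
  | .and φ ψ => vars φ ∪ vars ψ
  | .or φ ψ  => vars φ ∪ vars ψ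
  | .dia _ φ => vars φ
  | .box _ φ => vars φ
  | .mu X φ  => insert X (vars φ)
  | .nu X φ  => insert X (vars φ)

/-- The frame conditions `D, T, B, 4, 5`. -/
inductive FrameCond : Type
  | D | T | B | four | five
  deriving DecidableEq

/-- Satisfaction of a frame condition by a binary relation. -/
def FrameCond.holds : FrameCond → (W → W → Prop) → Prop
  | .D, R    => ∀ s, ∃ t, R s t
  | .T, R    => ∀ s, R s s
  | .B, R    => ∀ s t, R s t → R t s
  | .four, R => ∀ s t r, R s t → R t r → R s r
  | .five, R => ∀ s t r, R s t → R s r → R t r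

/-- A model for the logic `L` (assigning frame conditions to each agent). -/
def modelFor (L : Ag → Set FrameCond) (M : Kripke Ag PVar W) : Prop :=
  ∀ α : Ag, ∀ c ∈ L α, c.holds (M.R α)

/-- `L`-satisfiability of a (closed) formula. -/
def Satisfiable [DecidableEq LVar] (L : Ag → Set FrameCond)
    (φ : Formula Ag PVar LVar) : Prop :=
  ∃ (W : Type) (M : Kripke Ag PVar W) (s : W),
    modelFor L M ∧ ∀ ρ : LVar → Set W, s ∈ sem M ρ φ

/-- Finite conjunction. -/
def listAnd : List (Formula Ag PVar LVar) → Formula Ag PVar LVar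
  | []     => .tt
  | φ :: l => .and φ (listAnd l)

/-- Finite disjunction. -/
def listOr : List (Formula Ag PVar LVar) → Formula Ag PVar LVar
  | []     => .ff
  | φ :: l => .or φ (listOr l)

/-- Negation-normal-form negation (de Morgan dual), with `¬X = X`. -/
def neg : Formula Ag PVar LVar → Formula Ag PVar LVar
  | .prop p  => .nprop p
  | .nprop p => .prop p
  | .tt      => .ff
  | .ff      => .tt
  | .var X   => .var X
  | .and φ ψ => .or (neg φ) (neg ψ)
  | .or φ ψ  => .and (neg φ) (neg ψ)
  | .box α φ => .dia α (neg φ)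
  | .dia α φ => .box α (neg φ)
  | .mu X φ  => .nu X (neg φ)
  | .nu X φ  => .mu X (neg φ)

/-- `Inv(ψ) = νX.(ψ ∧ ⋀_{α ∈ Ag} [α]X)`. -/
noncomputable def InvF [Fintype Ag] (X : LVar) (ψ : Formula Ag PVar LVar) : Formula Ag PVar LVar :=
  .nu X (.and ψ (listAnd ((Finset.univ : Finset Ag).toList.map fun α => .box α (.var X))))

/-- The finite set of subformulas of a formula. -/
def sub [DecidableEq Ag] [DecidableEq PVar] [DecidableEq LVar] :
    Formula Ag PVar LVar → Finset (Formula Ag PVar LVar)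
  | .prop p  => {.prop p}
  | .nprop p => {.nprop p}
  | .tt      => {.tt}
  | .ff      => {.ff}
  | .var X   => {.var X}
  | .and φ ψ => insert (.and φ ψ) (sub φ ∪ sub ψ)
  | .or φ ψ  => insert (.or φ ψ) (sub φ ∪ sub ψ)
  | .dia α φ => insert (.dia α φ) (sub φ)
  | .box α φ => insert (.box α φ) (sub φ)
  | .mu X φ  => insert (.mu X φ) (sub φ)
  | .nu X φ  => insert (.nu X φ) (sub φ)

/-- `s̄ub(φ) = sub(φ) ∪ {¬ψ | ψ ∈ sub(φ)}`. -/
def sbar [DecidableEq Ag] [DecidableEq PVar] [DecidableEq LVar]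
    (φ : Formula Ag PVar LVar) : Finset (Formula Ag PVar LVar) :=
  sub φ ∪ (sub φ).image neg


/-- A formula is recursion-free when it contains no `μ`, `ν`, or logical variables. -/
def recFree : Formula Ag PVar LVar → Prop
  | .prop _  => True
  | .nprop _ => True
  | .tt      => True
  | .ff      => True
  | .var _   => False
  | .and φ ψ => recFree φ ∧ recFree ψ
  | .or φ ψ  => recFree φ ∧ recFree ψ
  | .dia _ φ => recFree φ
  | .box _ φ => recFree φ
  | .mu _ _  => False
  | .nu _ _  => False

/-- Modal depth of a (recursion-free) formula. -/
def md : Formula Ag PVar LVar → ℕ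
  | .and φ ψ => max (md φ) (md ψ)
  | .or φ ψ  => max (md φ) (md ψ)
  | .dia _ φ => md φ + 1
  | .box _ φ => md φ + 1
  | _        => 0

/-- The axiom `ax^x_α` with `ψ` substituted for the placeholder `p`,
written in negation normal form (`χ → χ'` is `¬χ ∨ χ'`). -/
def axSub : FrameCond → Ag → Formula Ag PVar LVar → Formula Ag PVar LVar
  | .D, α, _    => .dia α .tt
  | .T, α, ψ    => .or (.dia α (neg ψ)) ψ
  | .B, α, ψ    => .or (.box α (.dia α (neg ψ))) ψ
  | .four, α, ψ => .or (.dia α (neg ψ)) (.box α (.box α ψ))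
  | .five, α, ψ => .or (.box α (.dia α (neg ψ))) (.box α ψ)

/-- Position of a frame condition in the fixed linear order `D, T, B, 4, 5`. -/
def ord : FrameCond → ℕ
  | .D => 0
  | .T => 1
  | .B => 2
  | .four => 3
  | .five => 4

/-- `[Ag]ψ = ⋀_{α ∈ Ag} [α]ψ`. -/
noncomputable def boxAg [Fintype Ag] (ψ : Formula Ag PVar LVar) : Formula Ag PVar LVar :=
  listAnd ((Finset.univ : Finset Ag).toList.map fun α => .box α ψ)

/-- `Inv_d(ψ) = ⋀_{0 ≤ i ≤ d} [Ag]^i ψ`. -/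
noncomputable def InvD [Fintype Ag] (d : ℕ) (ψ : Formula Ag PVar LVar) : Formula Ag PVar LVar :=
  listAnd ((List.range (d + 1)).map fun i => (boxAg)^[i] ψ)

/-- The one-step translation
`τ^x_A(φ) = φ ∧ Inv_d(⋀_{ψ ∈ s̄ub(φ), α ∈ A} ax^x_α[ψ/p])`, where
`d = md(φ)` if `x ≠ 4` and `d = md(φ)·|φ|` if `x = 4`. -/
noncomputable def translOneStep [Fintype Ag] [DecidableEq Ag] [DecidableEq PVar] [DecidableEq LVar]
    (x : FrameCond) (A : Finset Ag) (φ : Formula Ag PVar LVar) : Formula Ag PVar LVar :=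
  let d := if x = FrameCond.four then md φ * (sub φ).card else md φ
  .and φ (InvD d (listAnd ((sbar φ).toList.map fun ψ =>
    listAnd (A.toList.map fun α => axSub x α ψ))))

section Helpers

set_option linter.unusedSectionVars false

/-! ### Syntax and semantics of recursion-free formulas -/

theorem neg_neg_formula (ψ : Formula Ag PVar LVar) : neg (neg ψ) = ψ := by
  induction ψ <;> simp_all [neg]

theorem sem_neg [DecidableEq LVar] (M : Kripke Ag PVar W) (ρ : LVar → Set W)
    (ψ : Formula Ag PVar LVar) (h : recFree ψ) (t : W) :
    t ∈ sem M ρ (neg ψ) ↔ t ∉ sem M ρ ψ := by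
  induction ψ generalizing t with
  | prop p => simp [neg, sem]
  | nprop p => simp [neg, sem]
  | tt => simp [neg, sem]
  | ff => simp [neg, sem]
  | var X => exact h.elim
  | and φ ψ ih1 ih2 => simp [neg, sem, ih1 h.1, ih2 h.2, imp_iff_not_or]
  | or φ ψ ih1 ih2 => simp [neg, sem, ih1 h.1, ih2 h.2]
  | dia α φ ih => simp [neg, sem, ih h]
  | box α φ ih => simp [neg, sem, ih h]
  | mu X φ => exact h.elim
  | nu X φ => exact h.elim

theorem recFree_neg (ψ : Formula Ag PVar LVar) (h : recFree ψ) : recFree (neg ψ) := by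
  induction ψ <;> simp_all [neg, recFree]

theorem sem_listAnd [DecidableEq LVar] (M : Kripke Ag PVar W) (ρ : LVar → Set W)
    (l : List (Formula Ag PVar LVar)) (t : W) :
    t ∈ sem M ρ (listAnd l) ↔ ∀ ψ ∈ l, t ∈ sem M ρ ψ := by
  induction l with
  | nil => simp [listAnd, sem]
  | cons a l ih => simp [listAnd, sem, ih]

theorem sem_boxAg [Fintype Ag] [DecidableEq LVar] (M : Kripke Ag PVar W) (ρ : LVar → Set W)
    (ψ : Formula Ag PVar LVar) (t : W) :
    t ∈ sem M ρ (boxAg ψ) ↔ ∀ β u, M.R β t u → u ∈ sem M ρ ψ := by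
  simp [boxAg, sem_listAnd, sem]

/-- `Safe M P n t`: every state reachable from `t` in at most `n` steps satisfies `P`. -/
def Safe (M : Kripke Ag PVar W) (P : W → Prop) : ℕ → W → Prop
  | 0, t => P t
  | n + 1, t => P t ∧ ∀ β u, M.R β t u → Safe M P n u

section SafeLemmas
variable {M : Kripke Ag PVar W} {P : W → Prop} {t u : W} {n m : ℕ} {β : Ag}

theorem Safe.here (h : Safe M P n t) : P t := by
  cases n with
  | zero => exact h
  | succ n => exact h.1

theorem Safe.step (h : Safe M P (n + 1) t) (r : M.R β t u) : Safe M P n u := h.2 β u r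

theorem Safe.mono (h : Safe M P n t) (hm : m ≤ n) : Safe M P m t := by
  induction n generalizing m t with
  | zero =>
    obtain rfl : m = 0 := by omega
    exact h
  | succ n ih =>
    cases m with
    | zero => exact h.1
    | succ m => exact ⟨h.1, fun β u r => ih (h.2 β u r) (by omega)⟩

theorem Safe.of_forall (h : ∀ t, P t) : Safe M P n t := by
  induction n generalizing t with
  | zero => exact h t
  | succ n ih => exact ⟨h t, fun _ _ _ => ih⟩

theorem Safe.congr {Q : W → Prop} (hPQ : ∀ t, P t ↔ Q t) : Safe M P n t ↔ Safe M Q n t := by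
  rw [show P = Q from funext fun t => propext (hPQ t)]

end SafeLemmas

theorem safe_iff_iterate [Fintype Ag] [DecidableEq LVar] (M : Kripke Ag PVar W)
    (ρ : LVar → Set W) (ψ : Formula Ag PVar LVar) (d : ℕ) (t : W) :
    (∀ i ≤ d, t ∈ sem M ρ (boxAg^[i] ψ)) ↔ Safe M (fun u => u ∈ sem M ρ ψ) d t := by
  induction d generalizing t with
  | zero => simp [Safe]
  | succ d ih =>
    simp only [Safe, ← ih]
    constructor
    · intro h
      refine ⟨h 0 (by omega), fun β u r i hi => ?_⟩
      have := h (i + 1) (by omega)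
      rw [Function.iterate_succ_apply', sem_boxAg] at this
      exact this β u r
    · rintro ⟨h0, h⟩ i hi
      cases i with
      | zero => exact h0
      | succ i =>
        rw [Function.iterate_succ_apply', sem_boxAg]
        exact fun β u r => h β u r i (by omega)

section Sub
variable [DecidableEq Ag] [DecidableEq PVar] [DecidableEq LVar]

theorem self_mem_sub (φ : Formula Ag PVar LVar) : φ ∈ sub φ := by
  cases φ <;> simp [sub]

theorem sub_subset_of_mem {φ ψ : Formula Ag PVar LVar} (h : ψ ∈ sub φ) : sub ψ ⊆ sub φ := by
  induction φ with
  | prop p => simp only [sub, Finset.mem_singleton] at h; subst h; rfl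
  | nprop p => simp only [sub, Finset.mem_singleton] at h; subst h; rfl
  | tt => simp only [sub, Finset.mem_singleton] at h; subst h; rfl
  | ff => simp only [sub, Finset.mem_singleton] at h; subst h; rfl
  | var X => simp only [sub, Finset.mem_singleton] at h; subst h; rfl
  | and φ χ ih1 ih2 =>
    simp only [sub, Finset.mem_insert, Finset.mem_union] at h
    rcases h with rfl | h | h
    · rfl
    · exact (ih1 h).trans fun x hx => by simp [sub, hx]
    · exact (ih2 h).trans fun x hx => by simp [sub, hx]
  | or φ χ ih1 ih2 =>
    simp only [sub, Finset.mem_insert, Finset.mem_union] at h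
    rcases h with rfl | h | h
    · rfl
    · exact (ih1 h).trans fun x hx => by simp [sub, hx]
    · exact (ih2 h).trans fun x hx => by simp [sub, hx]
  | dia α φ ih | box α φ ih | mu X φ ih | nu X φ ih =>
    simp only [sub, Finset.mem_insert] at h
    rcases h with rfl | h
    · rfl
    · exact (ih h).trans fun x hx => by simp [sub, hx]

theorem recFree_of_mem_sub {φ ψ : Formula Ag PVar LVar} (hφ : recFree φ) (h : ψ ∈ sub φ) :
    recFree ψ := by
  induction φ with
  | prop p => simp only [sub, Finset.mem_singleton] at h; subst h; exact hφ
  | nprop p => simp only [sub, Finset.mem_singleton] at h; subst h; exact hφ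
  | tt => simp only [sub, Finset.mem_singleton] at h; subst h; exact hφ
  | ff => simp only [sub, Finset.mem_singleton] at h; subst h; exact hφ
  | var X => exact hφ.elim
  | and φ χ ih1 ih2 | or φ χ ih1 ih2 =>
    simp only [sub, Finset.mem_insert, Finset.mem_union] at h
    rcases h with rfl | h | h
    · exact hφ
    · exact ih1 hφ.1 h
    · exact ih2 hφ.2 h
  | dia α φ ih | box α φ ih =>
    simp only [sub, Finset.mem_insert] at h
    rcases h with rfl | h
    · exact hφ
    · exact ih hφ h
  | mu X φ | nu X φ => exact hφ.elim

theorem recFree_of_mem_sbar {φ ψ : Formula Ag PVar LVar} (hφ : recFree φ) (h : ψ ∈ sbar φ) :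
    recFree ψ := by
  simp only [sbar, Finset.mem_union, Finset.mem_image] at h
  rcases h with h | ⟨χ, h, rfl⟩
  · exact recFree_of_mem_sub hφ h
  · exact recFree_neg _ (recFree_of_mem_sub hφ h)

/-- The formula `ψ` is a modality `[β]χ` or `⟨β⟩χ` of the agent `β`. -/
def isMod (β : Ag) : Formula Ag PVar LVar → Prop
  | .box γ _ => γ = β
  | .dia γ _ => γ = β
  | _ => False

/-- The body of the box attached to a modal formula: `χ` for `[β]χ`, and `¬χ` for `⟨β⟩χ`,
which is equivalent to `¬[β]¬χ`. Non-modal formulas get the junk value `tt`. -/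
def bd : Formula Ag PVar LVar → Formula Ag PVar LVar
  | .box _ χ => χ
  | .dia _ χ => neg χ
  | _ => .tt

theorem bd_mem {φ ψ : Formula Ag PVar LVar} {β : Ag} (h : ψ ∈ sub φ) (hm : isMod β ψ) :
    bd ψ ∈ sbar φ ∧ .dia β (neg (bd ψ)) ∈ sbar φ := by
  have hsub := sub_subset_of_mem h
  cases ψ with
  | box γ χ =>
    obtain rfl : γ = β := hm
    have : χ ∈ sub φ := hsub (by simp [sub, self_mem_sub])
    refine ⟨by simp [sbar, bd, this], ?_⟩
    simp only [sbar, bd, Finset.mem_union, Finset.mem_image]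
    exact Or.inr ⟨_, h, rfl⟩
  | dia γ χ =>
    obtain rfl : γ = β := hm
    have : χ ∈ sub φ := hsub (by simp [sub, self_mem_sub])
    simp only [sbar, bd, Finset.mem_union, Finset.mem_image, neg_neg_formula]
    exact ⟨Or.inr ⟨_, this, rfl⟩, Or.inl h⟩
  | _ => exact hm.elim

theorem exists_not_isMod (φ : Formula Ag PVar LVar) : ∃ ψ ∈ sub φ, ∀ β, ¬ isMod β ψ := by
  induction φ with
  | dia α φ ih | box α φ ih =>
    obtain ⟨ψ, h, hψ⟩ := ih
    exact ⟨ψ, by simp [sub, h], hψ⟩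
  | _ => exact ⟨_, self_mem_sub _, fun β h => h⟩

open Classical in
/-- The `β`-modal subformulas of `φ`. -/
noncomputable def Mods (φ : Formula Ag PVar LVar) (β : Ag) : Finset (Formula Ag PVar LVar) :=
  (sub φ).filter (isMod β)

theorem mem_Mods {φ ψ : Formula Ag PVar LVar} {β : Ag} :
    ψ ∈ Mods φ β ↔ ψ ∈ sub φ ∧ isMod β ψ := by simp [Mods]

/-- Since some subformula is not modal, at most `|φ| - 1` subformulas are `β`-modal. -/
theorem card_Mods_lt (φ : Formula Ag PVar LVar) (β : Ag) :
    (Mods φ β).card < (sub φ).card := by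
  obtain ⟨ψ, h, hψ⟩ := exists_not_isMod φ
  refine Finset.card_lt_card ⟨fun _ hx => (mem_Mods.1 hx).1, fun hs => ?_⟩
  have := hs h
  simp only [Mods, Finset.mem_filter] at this
  exact hψ β this.2

end Sub

/-! ### The axioms and the translation, semantically -/

section Ax
variable [DecidableEq Ag] [DecidableEq PVar] [DecidableEq LVar]

/-- All the instances of the axiom of `x` used by the translation hold at `t`. -/
def AxAt (M : Kripke Ag PVar W) (ρ : LVar → Set W) (x : FrameCond) (A : Finset Ag)
    (φ : Formula Ag PVar LVar) (t : W) : Prop :=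
  ∀ ψ ∈ sbar φ, ∀ α ∈ A, t ∈ sem M ρ (axSub x α ψ)

theorem sem_transl [Fintype Ag] (M : Kripke Ag PVar W) (ρ : LVar → Set W) (x : FrameCond)
    (A : Finset Ag) (φ : Formula Ag PVar LVar) (t : W) :
    t ∈ sem M ρ (translOneStep x A φ) ↔ t ∈ sem M ρ φ ∧ Safe M (AxAt M ρ x A φ)
      (if x = FrameCond.four then md φ * (sub φ).card else md φ) t := by
  simp only [translOneStep, sem, Set.mem_inter_iff, InvD, sem_listAnd, List.forall_mem_map,
    List.mem_range, Nat.lt_succ_iff]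
  rw [safe_iff_iterate]
  refine and_congr_right fun _ => Safe.congr fun u => ?_
  simp [sem_listAnd, AxAt]

/-- Soundness of the axioms on frames satisfying the condition. -/
theorem axAt_of_holds {M : Kripke Ag PVar W} {ρ : LVar → Set W} {x : FrameCond} {A : Finset Ag}
    {φ : Formula Ag PVar LVar} (hφ : recFree φ) (h : ∀ α ∈ A, x.holds (M.R α)) (t : W) :
    AxAt M ρ x A φ t := by
  intro ψ hψ α hα
  have hr := recFree_of_mem_sbar hφ hψ
  have hx := h α hα
  cases x with
  | D =>
    obtain ⟨u, hu⟩ := hx t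
    exact ⟨u, hu, trivial⟩
  | T =>
    by_cases hp : t ∈ sem M ρ ψ
    · exact Or.inr hp
    · exact Or.inl ⟨t, hx t, (sem_neg M ρ ψ hr t).2 hp⟩
  | B =>
    by_cases hp : t ∈ sem M ρ ψ
    · exact Or.inr hp
    · exact Or.inl fun u hu => ⟨t, hx t u hu, (sem_neg M ρ ψ hr t).2 hp⟩
  | four =>
    by_cases hp : ∀ u, M.R α t u → u ∈ sem M ρ ψ
    · exact Or.inr fun u hu v hv => hp v (hx t u v hu hv)
    · push Not at hp
      obtain ⟨u, hu, hp⟩ := hp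
      exact Or.inl ⟨u, hu, (sem_neg M ρ ψ hr u).2 hp⟩
  | five =>
    by_cases hp : ∀ u, M.R α t u → u ∈ sem M ρ ψ
    · exact Or.inr hp
    · push Not at hp
      obtain ⟨u, hu, hp⟩ := hp
      exact Or.inl fun v hv => ⟨u, hx t v u hv hu, (sem_neg M ρ ψ hr u).2 hp⟩

section
variable {M : Kripke Ag PVar W} {ρ : LVar → Set W} {A : Finset Ag} {φ : Formula Ag PVar LVar}
  {t : W} {α : Ag} {χ : Formula Ag PVar LVar}

theorem AxAt.T (h : AxAt M ρ .T A φ t) (hφ : recFree φ) (hα : α ∈ A) (hχ : χ ∈ sbar φ)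
    (hb : t ∈ sem M ρ (.box α χ)) : t ∈ sem M ρ χ := by
  rcases h χ hχ α hα with ⟨u, hu, hn⟩ | h
  · exact absurd (hb u hu) ((sem_neg M ρ χ (recFree_of_mem_sbar hφ hχ) u).1 hn)
  · exact h

theorem AxAt.B (h : AxAt M ρ .B A φ t) (hφ : recFree φ) (hα : α ∈ A) (hχ : χ ∈ sbar φ) {u : W}
    (hr : M.R α t u) (hb : u ∈ sem M ρ (.box α χ)) : t ∈ sem M ρ χ := by
  rcases h χ hχ α hα with h | h
  · obtain ⟨v, hv, hn⟩ := h u hr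
    exact absurd (hb v hv) ((sem_neg M ρ χ (recFree_of_mem_sbar hφ hχ) v).1 hn)
  · exact h

theorem AxAt.four (h : AxAt M ρ .four A φ t) (hφ : recFree φ) (hα : α ∈ A) (hχ : χ ∈ sbar φ)
    {u : W} (hb : t ∈ sem M ρ (.box α χ)) (hr : M.R α t u) : u ∈ sem M ρ (.box α χ) := by
  rcases h χ hχ α hα with ⟨v, hv, hn⟩ | h
  · exact absurd (hb v hv) ((sem_neg M ρ χ (recFree_of_mem_sbar hφ hχ) v).1 hn)
  · exact h u hr

theorem AxAt.five (h : AxAt M ρ .five A φ t) (hφ : recFree φ) (hα : α ∈ A) (hχ : χ ∈ sbar φ)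
    {u : W} (hr : M.R α t u) (hb : u ∈ sem M ρ (.box α χ)) : t ∈ sem M ρ (.box α χ) := by
  rcases h χ hχ α hα with h | h
  · obtain ⟨v, hv, hn⟩ := h u hr
    exact absurd (hb v hv) ((sem_neg M ρ χ (recFree_of_mem_sbar hφ hχ) v).1 hn)
  · exact h

end
end Ax

/-! ### Transfer of truth to a model whose states carry a budget -/

section Transfer
variable [DecidableEq Ag] [DecidableEq PVar] [DecidableEq LVar]

/-- The requirement on the new relation of an agent that makes the box formulas of that agent
transfer: along new edges, bodies of true boxes are true and still within the budget. -/
def BoxOK {S : Type} (M : Kripke Ag PVar W) (ρ : LVar → Set W) (φ : Formula Ag PVar LVar)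
    (w : S → W) (k : S → ℕ) (α : Ag) (R' : S → S → Prop) : Prop :=
  ∀ χ σ σ', .box α χ ∈ sub φ → md χ < k σ → w σ ∈ sem M ρ (.box α χ) → R' σ σ' →
    w σ' ∈ sem M ρ χ ∧ md χ ≤ k σ'

/-- The requirement on the new relation of an agent that makes the diamond formulas of that agent
transfer: true diamonds within the budget have witnesses within the budget. -/
def DiaOK {S : Type} (M : Kripke Ag PVar W) (ρ : LVar → Set W) (φ : Formula Ag PVar LVar)
    (w : S → W) (k : S → ℕ) (α : Ag) (R' : S → S → Prop) : Prop :=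
  ∀ χ σ, .dia α χ ∈ sub φ → md χ < k σ → w σ ∈ sem M ρ (.dia α χ) →
    ∃ σ', R' σ σ' ∧ w σ' ∈ sem M ρ χ ∧ md χ ≤ k σ'

/-- Truth of subformulas of `φ` whose modal depth is within the budget passes from `M` to the new
model. Only this direction holds, which suffices because formulas are in negation normal form. -/
theorem transfer {S : Type} {M : Kripke Ag PVar W} {ρ : LVar → Set W} {N : Kripke Ag PVar S}
    {w : S → W} {k : S → ℕ} {φ : Formula Ag PVar LVar}
    (hV : ∀ σ, N.V σ = M.V (w σ))
    (hbox : ∀ α, BoxOK M ρ φ w k α (N.R α)) (hdia : ∀ α, DiaOK M ρ φ w k α (N.R α))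
    (ρ' : LVar → Set S) (ψ : Formula Ag PVar LVar) (hr : recFree ψ) (hsub : sub ψ ⊆ sub φ)
    (σ : S) (hk : md ψ ≤ k σ) (hσ : w σ ∈ sem M ρ ψ) : σ ∈ sem N ρ' ψ := by
  induction ψ generalizing σ with
  | prop p => simpa [sem, hV] using hσ
  | nprop p => simpa [sem, hV] using hσ
  | tt => trivial
  | ff => exact hσ.elim
  | var X => exact hr.elim
  | mu X φ => exact hr.elim
  | nu X φ => exact hr.elim
  | and φ₁ φ₂ ih1 ih2 =>
    simp only [md, sup_le_iff] at hk
    refine ⟨ih1 hr.1 (fun x hx => hsub (by simp [sub, hx])) σ hk.1 hσ.1,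
      ih2 hr.2 (fun x hx => hsub (by simp [sub, hx])) σ hk.2 hσ.2⟩
  | or φ₁ φ₂ ih1 ih2 =>
    simp only [md, sup_le_iff] at hk
    rcases hσ with hσ | hσ
    · exact Or.inl (ih1 hr.1 (fun x hx => hsub (by simp [sub, hx])) σ hk.1 hσ)
    · exact Or.inr (ih2 hr.2 (fun x hx => hsub (by simp [sub, hx])) σ hk.2 hσ)
  | box α χ ih =>
    intro σ' hR
    obtain ⟨h1, h2⟩ := hbox α χ σ σ' (hsub (self_mem_sub _)) hk hσ hR
    exact ih hr (fun x hx => hsub (by simp [sub, hx])) σ' h2 h1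
  | dia α χ ih =>
    obtain ⟨σ', hR, h1, h2⟩ := hdia α χ σ (hsub (self_mem_sub _)) hk hσ
    exact ⟨σ', hR, ih hr (fun x hx => hsub (by simp [sub, hx])) σ' h2 h1⟩

theorem satisfiable_of_transfer {S : Type} {M : Kripke Ag PVar W} {ρ : LVar → Set W}
    {w : S → W} {k : S → ℕ} {φ : Formula Ag PVar LVar} (hφ : recFree φ)
    (R' : Ag → S → S → Prop) (L : Ag → Set FrameCond)
    (hL : ∀ α, ∀ c ∈ L α, c.holds (R' α))
    (hbox : ∀ α, BoxOK M ρ φ w k α (R' α)) (hdia : ∀ α, DiaOK M ρ φ w k α (R' α))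
    (σ : S) (hk : md φ ≤ k σ) (hσ : w σ ∈ sem M ρ φ) : Satisfiable L φ :=
  ⟨S, ⟨R', fun σ => M.V (w σ)⟩, σ, hL, fun ρ' =>
    transfer (M := M) (w := w) (N := ⟨R', fun σ => M.V (w σ)⟩) (fun _ => rfl) hbox hdia ρ' φ
      hφ (fun _ h => h) σ hk hσ⟩

/-! ### The plain lifting of a relation to budgeted states -/

/-- The plain lifting: an edge of `M` is lifted whenever the budget changes by at most one, and a
loop is added at states without budget, which keeps the lifting of a serial relation serial. -/
def simpleRel {S : Type} (M : Kripke Ag PVar W) (w : S → W) (k : S → ℕ) (β : Ag) (σ σ' : S) :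
    Prop :=
  (M.R β (w σ) (w σ') ∧ k σ ≤ k σ' + 1 ∧ k σ' ≤ k σ + 1) ∨ (σ = σ' ∧ k σ = 0)

/-- States with positive budget can follow every edge of `M` at the cost of one unit. -/
def CanStep {S : Type} (M : Kripke Ag PVar W) (w : S → W) (k : S → ℕ) : Prop :=
  ∀ (β : Ag) σ u, 0 < k σ → M.R β (w σ) u → ∃ σ', w σ' = u ∧ k σ = k σ' + 1

section
variable {S : Type} {M : Kripke Ag PVar W} {ρ : LVar → Set W} {w : S → W} {k : S → ℕ}
  {φ : Formula Ag PVar LVar} {β : Ag}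

theorem simpleRel_of_step {σ σ' : S} (h : M.R β (w σ) (w σ')) (hk : k σ = k σ' + 1) :
    simpleRel M w k β σ σ' := Or.inl ⟨h, by omega, by omega⟩

theorem simple_holds (hs : CanStep M w k) {c : FrameCond} (hc : ord c < 3)
    (hM : c.holds (M.R β)) : c.holds (simpleRel M w k β) := by
  cases c with
  | D =>
    intro σ
    rcases Nat.eq_zero_or_pos (k σ) with h | h
    · exact ⟨σ, Or.inr ⟨rfl, h⟩⟩
    · obtain ⟨u, hu⟩ := hM (w σ)
      obtain ⟨σ', rfl, h2⟩ := hs β σ u h hu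
      exact ⟨σ', simpleRel_of_step hu h2⟩
  | T => exact fun σ => Or.inl ⟨hM _, by omega, by omega⟩
  | B =>
    rintro σ σ' (⟨h, h1, h2⟩ | ⟨rfl, h⟩)
    · exact Or.inl ⟨hM _ _ h, h2, h1⟩
    · exact Or.inr ⟨rfl, h⟩
  | four => simp [ord] at hc
  | five => simp [ord] at hc

theorem simple_box : BoxOK M ρ φ w k β (simpleRel M w k β) := by
  rintro χ σ σ' - hk hσ (⟨h, h1, h2⟩ | ⟨rfl, h⟩)
  · exact ⟨hσ _ h, by omega⟩
  · omega

theorem simple_dia (hs : CanStep M w k) : DiaOK M ρ φ w k β (simpleRel M w k β) := by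
  rintro χ σ - hk ⟨u, hu, hχ⟩
  obtain ⟨σ', rfl, h2⟩ := hs β σ u (by omega) hu
  exact ⟨σ', simpleRel_of_step hu h2, hχ, by omega⟩

theorem DiaOK.mono {R' R'' : S → S → Prop} (h : DiaOK M ρ φ w k β R')
    (hR : ∀ σ σ', R' σ σ' → R'' σ σ') : DiaOK M ρ φ w k β R'' := by
  intro χ σ h1 h2 h3
  obtain ⟨σ', hr, h'⟩ := h χ σ h1 h2 h3
  exact ⟨σ', hR _ _ hr, h'⟩

end

/-! ### Seriality, reflexivity and symmetry -/

section DTB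
variable {M : Kripke Ag PVar W} {ρ : LVar → Set W} {A : Finset Ag}
  {φ : Formula Ag PVar LVar} {L1 L2 : Ag → Set FrameCond} {s : W}

/-- States paired with a budget `n` such that `P` holds within distance `n`. -/
def Budgeted (M : Kripke Ag PVar W) (P : W → Prop) : Type := {p : W × ℕ // Safe M P p.2 p.1}

theorem canStep_budgeted (M : Kripke Ag PVar W) (P : W → Prop) :
    CanStep M (fun σ : Budgeted M P => σ.1.1) (fun σ => σ.1.2) := by
  rintro β ⟨⟨t, k⟩, h⟩ u hk hu
  obtain ⟨k, rfl⟩ : ∃ n, k = n + 1 := ⟨k - 1, by simp at hk; omega⟩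
  exact ⟨⟨(u, k), Safe.step h hu⟩, rfl, rfl⟩

/-- The part common to `D`, `T` and `B`: the agents outside `A` keep their plain lifting. -/
theorem satisfiable_DTB {x : FrameCond} (hx : ord x < 3)
    (h1 : ∀ α ∈ A, L1 α = L2 α ∪ {x}) (h2 : ∀ α ∉ A, L1 α = L2 α)
    (hprec : ∀ α : Ag, ∀ c ∈ L2 α, ord c < ord x) (hφ : recFree φ)
    (hM : modelFor L2 M) (hs : s ∈ sem M ρ φ) {P : W → Prop} (hsafe : Safe M P (md φ) s)
    (R' : Ag → Budgeted M P → Budgeted M P → Prop)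
    (hle : ∀ α ∈ A, ∀ σ σ', simpleRel M (fun σ => σ.1.1) (fun σ => σ.1.2) α σ σ' → R' α σ σ')
    (hL2 : ∀ α ∈ A, ∀ c, ord c < ord x →
      c.holds (simpleRel M (fun σ : Budgeted M P => σ.1.1) (fun σ => σ.1.2) α) → c.holds (R' α))
    (hLx : ∀ α ∈ A, x.holds (R' α))
    (hbox : ∀ α ∈ A, BoxOK M ρ φ (fun σ => σ.1.1) (fun σ => σ.1.2) α (R' α)) :
    Satisfiable L1 φ := by
  have hcs := canStep_budgeted M P
  refine satisfiable_of_transfer (M := M) (ρ := ρ) (w := fun σ : Budgeted M P => σ.1.1)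
    (k := fun σ => σ.1.2) hφ
    (fun α => if α ∈ A then R' α else simpleRel M (fun σ => σ.1.1) (fun σ => σ.1.2) α) L1
    ?_ ?_ ?_ (⟨(s, md φ), hsafe⟩ : Budgeted M P) le_rfl hs
  · intro α c hc
    by_cases hα : α ∈ A
    · rw [h1 α hα] at hc
      simp only [hα, if_true]
      rcases hc with hc | hc
      · have := hprec α c hc
        exact hL2 α hα c this (simple_holds hcs (by omega) (hM α c hc))
      · obtain rfl : c = x := hc
        exact hLx α hα
    · rw [h2 α hα] at hc
      simp only [hα, if_false]
      have := hprec α c hc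
      exact simple_holds hcs (by omega) (hM α c hc)
  · intro α
    by_cases hα : α ∈ A
    · simpa only [hα, if_true] using hbox α hα
    · simpa only [hα, if_false] using simple_box
  · intro α
    by_cases hα : α ∈ A
    · simpa only [hα, if_true] using (simple_dia hcs).mono (hle α hα)
    · simpa only [hα, if_false] using simple_dia hcs

theorem case_D
    (h1 : ∀ α ∈ A, L1 α = L2 α ∪ {.D}) (h2 : ∀ α ∉ A, L1 α = L2 α)
    (hprec : ∀ α : Ag, ∀ c ∈ L2 α, ord c < ord .D) (hφ : recFree φ)
    (hM : modelFor L2 M) (hs : s ∈ sem M ρ φ)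
    (hsafe : Safe M (AxAt M ρ .D A φ) (md φ) s) : Satisfiable L1 φ := by
  refine satisfiable_DTB (by simp [ord]) h1 h2 hprec hφ hM hs hsafe
    (simpleRel M (fun σ => σ.1.1) (fun σ => σ.1.2)) (fun _ _ _ _ h => h) (fun _ _ _ _ h => h)
    ?_ (fun _ _ => simple_box)
  intro α hα σ
  rcases Nat.eq_zero_or_pos σ.1.2 with h | h
  · exact ⟨σ, Or.inr ⟨rfl, h⟩⟩
  · obtain ⟨u, hu, -⟩ := (Safe.here σ.2) φ (by simp [sbar, self_mem_sub]) α hα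
    obtain ⟨σ', rfl, h2⟩ := canStep_budgeted M _ α σ u h hu
    exact ⟨σ', simpleRel_of_step hu h2⟩

theorem case_T
    (h1 : ∀ α ∈ A, L1 α = L2 α ∪ {.T}) (h2 : ∀ α ∉ A, L1 α = L2 α)
    (hprec : ∀ α : Ag, ∀ c ∈ L2 α, ord c < ord .T) (hφ : recFree φ)
    (hM : modelFor L2 M) (hs : s ∈ sem M ρ φ)
    (hsafe : Safe M (AxAt M ρ .T A φ) (md φ) s) : Satisfiable L1 φ := by
  refine satisfiable_DTB (by simp [ord]) h1 h2 hprec hφ hM hs hsafe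
    (fun α σ σ' => simpleRel M (fun σ => σ.1.1) (fun σ => σ.1.2) α σ σ' ∨ σ = σ')
    (fun _ _ _ _ h => Or.inl h) ?_ (fun _ _ _ => Or.inr rfl) ?_
  · intro α hα c hc h
    cases c with
    | D => exact fun σ => (h σ).imp fun _ => Or.inl
    | _ => simp [ord] at hc
  · rintro α hα χ σ σ' hχ hk hσ (h | rfl)
    · exact simple_box χ σ σ' hχ hk hσ h
    · exact ⟨(Safe.here σ.2).T hφ hα (bd_mem (β := α) hχ rfl).1 hσ, hk.le⟩

theorem case_B
    (h1 : ∀ α ∈ A, L1 α = L2 α ∪ {.B}) (h2 : ∀ α ∉ A, L1 α = L2 α)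
    (hprec : ∀ α : Ag, ∀ c ∈ L2 α, ord c < ord .B) (hφ : recFree φ)
    (hM : modelFor L2 M) (hs : s ∈ sem M ρ φ)
    (hsafe : Safe M (AxAt M ρ .B A φ) (md φ) s) : Satisfiable L1 φ := by
  refine satisfiable_DTB (by simp [ord]) h1 h2 hprec hφ hM hs hsafe
    (fun α σ σ' => simpleRel M (fun σ => σ.1.1) (fun σ => σ.1.2) α σ σ' ∨
      simpleRel M (fun σ => σ.1.1) (fun σ => σ.1.2) α σ' σ)
    (fun _ _ _ _ h => Or.inl h) ?_ (fun _ _ _ _ => Or.symm) ?_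
  · intro α hα c hc h
    cases c with
    | D => exact fun σ => (h σ).imp fun _ => Or.inl
    | T => exact fun σ => Or.inl (h σ)
    | _ => simp [ord] at hc
  · rintro α hα χ σ σ' hχ hk hσ (h | ⟨h, h1, h2⟩ | ⟨rfl, h⟩)
    · exact simple_box χ σ σ' hχ hk hσ h
    -- every budgeted state satisfies the axioms, in particular the source of the edge of `M`
    -- whose reversal leads from `σ` to `σ'`
    · exact ⟨(Safe.here σ'.2).B hφ hα (bd_mem (β := α) hχ rfl).1 h hσ, by omega⟩
    · omega

end DTB

/-! ### Box sets -/

open Classical in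
/-- The `β`-modal subformulas of `φ` whose attached box `[β](bd ψ)` is true at `t`. -/
noncomputable def Bs (M : Kripke Ag PVar W) (ρ : LVar → Set W) (φ : Formula Ag PVar LVar)
    (β : Ag) (t : W) : Finset (Formula Ag PVar LVar) :=
  (Mods φ β).filter fun ψ => t ∈ sem M ρ (.box β (bd ψ))

section BoxSets
variable {M : Kripke Ag PVar W} {ρ : LVar → Set W} {φ : Formula Ag PVar LVar} {β : Ag} {t u : W}
  {ψ χ : Formula Ag PVar LVar}

theorem mem_Bs : ψ ∈ Bs M ρ φ β t ↔ ψ ∈ Mods φ β ∧ t ∈ sem M ρ (.box β (bd ψ)) := by simp [Bs]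

theorem Bs_body (h : ψ ∈ Bs M ρ φ β t) (hr : M.R β t u) : u ∈ sem M ρ (bd ψ) :=
  (mem_Bs.1 h).2 u hr

theorem Bs_of_box (h : .box β χ ∈ sub φ) (ht : t ∈ sem M ρ (.box β χ)) :
    .box β χ ∈ Bs M ρ φ β t :=
  mem_Bs.2 ⟨mem_Mods.2 ⟨h, rfl⟩, ht⟩

/-- Diamonds depend only on the box set. -/
theorem dia_iff_not_mem_Bs (hφ : recFree φ) (h : .dia β χ ∈ sub φ) :
    t ∈ sem M ρ (.dia β χ) ↔ .dia β χ ∉ Bs M ρ φ β t := by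
  have hr : recFree (.dia β χ) := recFree_of_mem_sub hφ h
  have hm : .dia β χ ∈ Mods φ β := mem_Mods.2 ⟨h, rfl⟩
  simp [mem_Bs, hm, bd, sem, sem_neg M ρ χ (show recFree χ from hr)]

theorem dia_congr (hφ : recFree φ) (h : .dia β χ ∈ sub φ)
    (hB : .dia β χ ∈ Bs M ρ φ β u → .dia β χ ∈ Bs M ρ φ β t)
    (ht : t ∈ sem M ρ (.dia β χ)) : u ∈ sem M ρ (.dia β χ) := by
  rw [dia_iff_not_mem_Bs hφ h] at *
  exact fun h => ht (hB h)

theorem card_Bs_lt : (Bs M ρ φ β t).card < (sub φ).card :=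
  lt_of_le_of_lt (Finset.card_le_card fun _ h => (mem_Bs.1 h).1) (card_Mods_lt φ β)

theorem Bs_four {A : Finset Ag} (h : AxAt M ρ .four A φ t) (hφ : recFree φ) (hβ : β ∈ A)
    (hr : M.R β t u) : Bs M ρ φ β t ⊆ Bs M ρ φ β u := by
  intro ψ hψ
  obtain ⟨h1, h2⟩ := mem_Bs.1 hψ
  obtain ⟨h3, h4⟩ := mem_Mods.1 h1
  exact mem_Bs.2 ⟨h1, h.four hφ hβ (bd_mem h3 h4).1 h2 hr⟩

end BoxSets

/-- Decorated states: a state `w` of the original model, a budget `k` for the modal depth, and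
possibly a tag recording that the state was entered along an edge of an agent; `l` is then the
level of the cluster of that agent the state belongs to. -/
structure Raw (W Ag : Type) where
  w : W
  k : ℕ
  tag : Option Ag
  l : ℕ

/-- The level of a decorated state with respect to `β`: `β`-edges only relate states of the same
level. -/
def lev (β : Ag) (σ : Raw W Ag) : ℕ := if σ.tag = some β then σ.l else σ.k

/-! ### Transitivity -/

section Four
variable (M : Kripke Ag PVar W) (ρ : LVar → Set W) (A : Finset Ag) (φ : Formula Ag PVar LVar)
  (L2 : Ag → Set FrameCond)

/-- An anchor of `u`: a state `a`, equal to `u` or a predecessor of `u`, with the box set of `u`,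
around which the axioms hold up to a distance `r`, where `r` may be the smaller the larger the box
set is. Diamonds of `u` are realised by successors of `a`. -/
def Anchor (β : Ag) (n : ℕ) (u : W) : Prop :=
  ∃ a r, Safe M (AxAt M ρ .four A φ) r a ∧ n ≤ r + (Bs M ρ φ β a).card ∧
    (a = u ∨ (M.R β a u ∧ Bs M ρ φ β a = Bs M ρ φ β u))

/-- The states of the transitive model: a budget `k` comes with the axioms up to distance
`k * |φ|`, and a tag comes with an anchor. -/
def Valid4 (σ : Raw W Ag) : Prop :=
  Safe M (AxAt M ρ .four A φ) (σ.k * (sub φ).card) σ.w ∧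
    ∀ β, σ.tag = some β → β ∈ A ∧ σ.l = σ.k + 1 ∧ Anchor M ρ A φ β (σ.l * (sub φ).card) σ.w

/-- Boxes true at `t` stay true at `u`, and their bodies hold there. -/
def Fwd (β : Ag) (t u : W) : Prop :=
  ∀ ψ ∈ Bs M ρ φ β t, u ∈ sem M ρ (bd ψ) ∧ ψ ∈ Bs M ρ φ β u

/-- The transitive relation of an agent in `A`, in the style of the Lemmon filtration; it is made
symmetric if the logic asks for it. At level `0` there is nothing to preserve. -/
def rel4 (β : Ag) (σ σ' : Raw W Ag) : Prop :=
  lev β σ = lev β σ' ∧ (lev β σ = 0 ∨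
    (Fwd M ρ φ β σ.w σ'.w ∧ (.B ∈ L2 β → Fwd M ρ φ β σ'.w σ.w)))

variable {M ρ A φ L2} {β : Ag} {σ : Raw W Ag}

theorem lev4 (h : Valid4 M ρ A φ σ) : σ.k ≤ lev β σ ∧ lev β σ ≤ σ.k + 1 := by
  unfold lev
  split_ifs with ht
  · have := (h.2 β ht).2.1
    omega
  · omega

theorem anchor4 (h : Valid4 M ρ A φ σ) (hβ : β ∈ A) :
    Anchor M ρ A φ β (lev β σ * (sub φ).card) σ.w := by
  unfold lev
  split_ifs with ht
  · exact (h.2 β ht).2.2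
  · exact ⟨σ.w, _, h.1, by omega, Or.inl rfl⟩

/-- A decorated state of positive level can follow every edge leaving its anchor, at the cost of one
unit of modal depth counted from its level. The distance available around the anchor stays positive
because a box set has fewer than `|φ|` elements. -/
theorem step4 (hφ : recFree φ) (hB : .B ∈ L2 β → ∀ s t, M.R β s t → M.R β t s)
    (h : Valid4 M ρ A φ σ) (hβ : β ∈ A) (hl : 0 < lev β σ) :
    ∃ a, Bs M ρ φ β a = Bs M ρ φ β σ.w ∧ ∀ v, M.R β a v →
      ∃ σ', Valid4 M ρ A φ σ' ∧ σ'.w = v ∧ lev β σ = σ'.k + 1 ∧ rel4 M ρ φ L2 β σ σ' := by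
  obtain ⟨a, r, hsafe, hr, ha⟩ := anchor4 h hβ
  have hBa : Bs M ρ φ β a = Bs M ρ φ β σ.w := ha.elim (fun h => by rw [h]) And.right
  refine ⟨a, hBa, fun v hv => ?_⟩
  obtain ⟨k, hk⟩ : ∃ k, lev β σ = k + 1 := ⟨lev β σ - 1, by omega⟩
  have hcard : (Bs M ρ φ β a).card < (sub φ).card := card_Bs_lt
  rw [hk, add_mul, one_mul] at hr
  obtain ⟨r, rfl⟩ : ∃ r', r = r' + 1 := ⟨r - 1, by omega⟩
  have hv' := hsafe.step hv
  have hmono : Bs M ρ φ β a ⊆ Bs M ρ φ β v := Bs_four hsafe.here hφ hβ hv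
  refine ⟨⟨v, k, some β, k + 1⟩, ⟨hv'.mono (by simp only; omega), ?_⟩, rfl, hk, ?_, Or.inr ?_⟩
  · rintro γ hγ
    obtain rfl : β = γ := by simpa using hγ
    refine ⟨hβ, rfl, ?_⟩
    simp only [add_mul, one_mul]
    -- either the box set is unchanged and `a` stays the anchor, or it grows and `v` can afford
    -- to be its own anchor
    by_cases heq : Bs M ρ φ β a = Bs M ρ φ β v
    · exact ⟨a, r + 1, hsafe, by omega, Or.inr ⟨hv, heq⟩⟩
    · have : (Bs M ρ φ β a).card < (Bs M ρ φ β v).card :=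
        Finset.card_lt_card (hmono.ssubset_of_ne heq)
      exact ⟨v, r, hv', by omega, Or.inl rfl⟩
  · simp [lev, ← hk]
  · refine ⟨fun ψ hψ => ?_, fun hb ψ hψ => ?_⟩
    · rw [← hBa] at hψ
      exact ⟨Bs_body hψ hv, hmono hψ⟩
    · have hva := hB hb _ _ hv
      have h2 := Bs_four hv'.here hφ hβ hva hψ
      refine ⟨?_, hBa ▸ h2⟩
      rcases ha with rfl | ⟨ha, -⟩
      · exact Bs_body hψ hva
      · exact Bs_body h2 ha

theorem case_four {L1 : Ag → Set FrameCond} {s : W}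
    (h1 : ∀ α ∈ A, L1 α = L2 α ∪ {.four}) (h2 : ∀ α ∉ A, L1 α = L2 α)
    (hprec : ∀ α : Ag, ∀ c ∈ L2 α, ord c < ord .four) (hφ : recFree φ)
    (hM : modelFor L2 M) (hs : s ∈ sem M ρ φ)
    (hsafe : Safe M (AxAt M ρ .four A φ) (md φ * (sub φ).card) s) : Satisfiable L1 φ := by
  have hcs : CanStep M (fun σ : {σ // Valid4 M ρ A φ σ} => σ.1.w) (fun σ => σ.1.k) := by
    rintro β ⟨⟨t, k, tag, l⟩, h⟩ u hk hu
    obtain ⟨k, rfl⟩ : ∃ n, k = n + 1 := ⟨k - 1, by simp at hk; omega⟩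
    have hc : 0 < (sub φ).card := Finset.card_pos.2 ⟨φ, self_mem_sub φ⟩
    have hsf := h.1
    simp only [add_mul, one_mul] at hsf
    refine ⟨⟨⟨u, k, none, 0⟩, ?_, by simp⟩, rfl, rfl⟩
    exact (hsf.mono (m := k * (sub φ).card + 1) (by omega)).step hu
  have hB : ∀ β, .B ∈ L2 β → ∀ s t, M.R β s t → M.R β t s := fun β h => hM β .B h
  refine satisfiable_of_transfer (M := M) (ρ := ρ)
    (w := fun σ : {σ // Valid4 M ρ A φ σ} => σ.1.w) (k := fun σ => σ.1.k) hφ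
    (fun α => if α ∈ A then fun σ σ' => rel4 M ρ φ L2 α σ.1 σ'.1
      else simpleRel M (fun σ => σ.1.w) (fun σ => σ.1.k) α) L1
    ?_ ?_ ?_ ⟨⟨s, md φ, none, 0⟩, hsafe, by simp⟩ le_rfl hs
  · intro α c hc
    by_cases hα : α ∈ A
    · rw [h1 α hα] at hc
      simp only [hα, if_true]
      rcases hc with hc | rfl
      · have hMc := hM α c hc
        have ho := hprec α c hc
        cases c with
        | D =>
          intro σ
          rcases Nat.eq_zero_or_pos (lev α σ.1) with h | h
          · exact ⟨σ, rfl, Or.inl h⟩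
          · obtain ⟨a, -, ha⟩ := step4 hφ (hB α) σ.2 hα h
            obtain ⟨v, hv⟩ := hMc a
            obtain ⟨σ', hσ', -, -, hr⟩ := ha v hv
            exact ⟨⟨σ', hσ'⟩, hr⟩
        | T =>
          have hF : ∀ t, Fwd M ρ φ α t t := fun t ψ hψ => ⟨Bs_body hψ (hMc t), hψ⟩
          exact fun σ => ⟨rfl, Or.inr ⟨hF _, fun _ => hF _⟩⟩
        | B =>
          rintro σ σ' ⟨h, h' | h'⟩
          · exact ⟨h.symm, Or.inl (h ▸ h')⟩
          · exact ⟨h.symm, Or.inr ⟨h'.2 hc, fun _ => h'.1⟩⟩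
        | four => simp at ho
        | five => simp [ord] at ho
      · rintro σ σ' σ'' ⟨h, h'⟩ ⟨g, g'⟩
        refine ⟨h.trans g, ?_⟩
        rcases h' with h' | h'
        · exact Or.inl h'
        rcases g' with g' | g'
        · exact Or.inl (h ▸ g')
        refine Or.inr ⟨fun ψ hψ => g'.1 ψ (h'.1 ψ hψ).2, fun hb ψ hψ => ?_⟩
        exact h'.2 hb ψ (g'.2 hb ψ hψ).2
    · rw [h2 α hα] at hc
      simp only [hα, if_false]
      exact simple_holds hcs (hprec α c hc) (hM α c hc)
  · intro α
    by_cases hα : α ∈ A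
    · simp only [hα, if_true]
      rintro χ σ σ' hχ hk hσ ⟨h, h'⟩
      have hk : md χ < σ.1.k := hk
      have l1 := lev4 (β := α) σ.2
      have l2 := lev4 (β := α) σ'.2
      rcases h' with h' | h'
      · omega
      · exact ⟨(h'.1 _ (Bs_of_box hχ hσ)).1, show md χ ≤ σ'.1.k by omega⟩
    · simpa only [hα, if_false] using simple_box
  · intro α
    by_cases hα : α ∈ A
    · simp only [hα, if_true]
      rintro χ σ hχ hk hσ
      have hk : md χ < σ.1.k := hk
      have l1 := lev4 (β := α) σ.2
      obtain ⟨a, ha, hstep⟩ := step4 hφ (hB α) σ.2 hα (by omega)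
      obtain ⟨v, hv, hv'⟩ := dia_congr (u := a) hφ hχ (fun h => ha ▸ h) hσ
      obtain ⟨σ', hσ', rfl, hk', hr⟩ := hstep v hv
      exact ⟨⟨σ', hσ'⟩, hr, hv', show md χ ≤ σ'.k by omega⟩
    · simpa only [hα, if_false] using simple_dia hcs

end Four

/-! ### Euclideanness -/

section Five
variable (M : Kripke Ag PVar W) (ρ : LVar → Set W) (A : Finset Ag) (φ : Formula Ag PVar LVar)
  (L2 : Ag → Set FrameCond)

/-- The true boxes of `β` at `t` have true bodies at `t` itself. -/
def Intr (β : Ag) (t : W) : Prop := ∀ ψ ∈ Bs M ρ φ β t, t ∈ sem M ρ (bd ψ)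

section Facts
variable {M ρ A φ} {β : Ag} {e u v : W}

theorem five_back (hφ : recFree φ) (hβ : β ∈ A) (he : AxAt M ρ .five A φ e) (h : M.R β e u) :
    Bs M ρ φ β u ⊆ Bs M ρ φ β e := by
  intro ψ hψ
  obtain ⟨h1, h2⟩ := mem_Bs.1 hψ
  obtain ⟨h3, h4⟩ := mem_Mods.1 h1
  exact mem_Bs.2 ⟨h1, he.five hφ hβ (bd_mem h3 h4).1 h h2⟩

/-- The instance of the axiom for the diamond dual to the box of `ψ`. -/
theorem five_dual (hφ : recFree φ) (hβ : β ∈ A) (he : AxAt M ρ .five A φ e) (h : M.R β e u)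
    {ψ : Formula Ag PVar LVar} (hψ : ψ ∈ Mods φ β)
    (hu : ∀ x, M.R β u x → ψ ∉ Bs M ρ φ β x) : ∀ x, M.R β e x → ψ ∉ Bs M ρ φ β x := by
  obtain ⟨h3, h4⟩ := mem_Mods.1 hψ
  obtain ⟨hb, hd⟩ := bd_mem h3 h4
  have key : ∀ x, x ∈ sem M ρ (.dia β (neg (bd ψ))) ↔ ψ ∉ Bs M ρ φ β x := by
    intro x
    simp [mem_Bs, hψ, sem, sem_neg M ρ _ (recFree_of_mem_sbar hφ hb)]
  exact fun x hx => (key x).1 (he.five hφ hβ hd h (fun y hy => (key y).2 (hu y hy)) x hx)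

/-- If the box of `ψ` fails at `u`, it fails at all successors of every predecessor of `u` at which
the axioms hold. -/
theorem five_spread (hφ : recFree φ) (hβ : β ∈ A) (he : AxAt M ρ .five A φ e)
    (hu : AxAt M ρ .five A φ u) (h : M.R β e u)
    {ψ : Formula Ag PVar LVar} (hψ : ψ ∈ Mods φ β) (hn : ψ ∉ Bs M ρ φ β u) :
    ∀ x, M.R β e x → ψ ∉ Bs M ρ φ β x :=
  five_dual hφ hβ he h hψ fun _ hx h' => hn (five_back hφ hβ hu hx h')

theorem five_sibling (hφ : recFree φ) (hβ : β ∈ A) (he : AxAt M ρ .five A φ e)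
    (hv : AxAt M ρ .five A φ v) (h : M.R β e u) (h' : M.R β e v) :
    Bs M ρ φ β u ⊆ Bs M ρ φ β v := by
  intro ψ hψ
  by_contra hn
  exact five_spread hφ hβ he hv h' (mem_Bs.1 hψ).1 hn u h hψ

theorem five_succ (hφ : recFree φ) (hβ : β ∈ A) (he : AxAt M ρ .five A φ e)
    (hu : AxAt M ρ .five A φ u) (hv : AxAt M ρ .five A φ v) (h : M.R β e u) (h' : M.R β u v) :
    Bs M ρ φ β u = Bs M ρ φ β v := by
  refine Finset.Subset.antisymm (fun ψ hψ => ?_) (five_back hφ hβ hu h')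
  by_contra hn
  have hm := (mem_Bs.1 hψ).1
  exact five_dual hφ hβ he h hm (five_spread hφ hβ hu hv h' hm hn) u h hψ

theorem five_equiv (hφ : recFree φ) (hβ : β ∈ A) (he : AxAt M ρ .five A φ e)
    (hu : AxAt M ρ .five A φ u) (h : M.R β e u) (h' : M.R β e e ∨ M.R β u e) :
    Bs M ρ φ β e = Bs M ρ φ β u := by
  refine Finset.Subset.antisymm (fun ψ hψ => ?_) (five_back hφ hβ he h)
  rcases h' with h' | h'
  · exact five_sibling hφ hβ he hu h' h hψ
  · exact five_back hφ hβ hu h' hψ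

theorem five_intr (hφ : recFree φ) (hβ : β ∈ A) (he : AxAt M ρ .five A φ e) (h : M.R β e u) :
    Intr M ρ φ β u := fun _ hψ => Bs_body (five_back hφ hβ he h hψ) h

end Facts

/-- The states of the euclidean model. A state tagged by `β` lies in a cluster entered from a state
`e` around which the axioms hold up to the level of the cluster, as a successor of `e` or, if the logic imposes
neither `T`, `B` nor `4` on `β ∈ A`, as a successor of a successor of `e`. -/
def Valid5 (σ : Raw W Ag) : Prop :=
  Safe M (AxAt M ρ .five A φ) σ.k σ.w ∧ ∀ β, σ.tag = some β →
    (∃ e, Safe M (AxAt M ρ .five A φ) σ.l e ∧ M.R β e σ.w ∧ σ.l = σ.k + 1) ∨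
    (β ∈ A ∧ ¬ (.T ∈ L2 β ∨ .B ∈ L2 β ∨ .four ∈ L2 β) ∧
      ∃ e v, Safe M (AxAt M ρ .five A φ) σ.l e ∧ M.R β e v ∧ M.R β v σ.w ∧ σ.l = σ.k + 2)

/-- The state belongs to a `β`-cluster. Under `T` or `B` every state does; otherwise only the
tagged states do, and the others merely look into a cluster. -/
def Inc (β : Ag) (σ : Raw W Ag) : Prop := σ.tag = some β ∨ .T ∈ L2 β ∨ .B ∈ L2 β

/-- The euclidean relation of an agent in `A`. Clusters are identified by their level and their
box set. A state outside the clusters sees the states of full budget in the cluster whose box set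
is that of its successors in `M`. At level `0` there is nothing to preserve. -/
def rel5 (β : Ag) (σ σ' : Raw W Ag) : Prop :=
  lev β σ = lev β σ' ∧ (lev β σ = 0 ∨ (Inc L2 β σ' ∧ Intr M ρ φ β σ'.w ∧
    ((Inc L2 β σ ∧ Intr M ρ φ β σ.w ∧ Bs M ρ φ β σ.w = Bs M ρ φ β σ'.w) ∨
     (¬ Inc L2 β σ ∧ lev β σ ≤ σ'.k + 1 ∧
      (∀ ψ, ψ ∈ Bs M ρ φ β σ'.w ↔ ∃ v, M.R β σ.w v ∧ ψ ∈ Bs M ρ φ β v) ∧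
      (∀ ψ ∈ Bs M ρ φ β σ.w, σ'.w ∈ sem M ρ (bd ψ)) ∧
      (.four ∈ L2 β → Bs M ρ φ β σ.w ⊆ Bs M ρ φ β σ'.w)))))

/-- The relation of a transitive agent outside `A`: edges of `M` between states of equal level,
and all edges at level `0`. -/
def relTrans (β : Ag) (σ σ' : Raw W Ag) : Prop :=
  lev β σ = lev β σ' ∧ (lev β σ = 0 ∨ M.R β σ.w σ'.w)

variable {M ρ A φ L2} {β : Ag} {σ : Raw W Ag}

theorem lev5 (h : Valid5 M ρ A φ L2 σ) : σ.k ≤ lev β σ ∧ lev β σ ≤ σ.k + 2 ∧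
    ((β ∉ A ∨ .T ∈ L2 β ∨ .B ∈ L2 β ∨ .four ∈ L2 β) → lev β σ ≤ σ.k + 1) := by
  unfold lev
  split_ifs with ht
  · rcases h.2 β ht with ⟨e, -, -, he⟩ | ⟨h1, h2, e, v, -, -, -, he⟩
    · refine ⟨by omega, by omega, fun _ => by omega⟩
    · refine ⟨by omega, by omega, fun h => ?_⟩
      tauto
  · refine ⟨by omega, by omega, fun _ => by omega⟩

theorem valid5_succ {e v : W} {k : ℕ} (he : Safe M (AxAt M ρ .five A φ) (k + 1) e)
    (hv : M.R β e v) : Valid5 M ρ A φ L2 ⟨v, k, some β, k + 1⟩ := by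
  refine ⟨he.step hv, fun γ hγ => ?_⟩
  obtain rfl : β = γ := by simpa using hγ
  exact Or.inl ⟨e, he, hv, rfl⟩

theorem intr_tag (hφ : recFree φ) (hβ : β ∈ A) (h : Valid5 M ρ A φ L2 σ) (ht : σ.tag = some β) :
    Intr M ρ φ β σ.w := by
  rcases h.2 β ht with ⟨e, he, hr, -⟩ | ⟨-, -, e, v, he, h1, h2, hl⟩
  · exact five_intr hφ hβ he.here hr
  · rw [hl] at he
    exact five_intr hφ hβ (he.step h1).here h2

theorem rel5_root (hφ : recFree φ) (hM : modelFor L2 M) (hβ : β ∈ A)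
    (h : Valid5 M ρ A φ L2 σ) (ht : σ.tag ≠ some β) {k : ℕ} (hk : σ.k = k + 1) {v : W}
    (hv : M.R β σ.w v) : rel5 M ρ φ L2 β σ ⟨v, k, some β, k + 1⟩ := by
  have hsafe := h.1
  rw [hk] at hsafe
  have hv' := (hsafe.step hv).here
  have hl : lev β σ = k + 1 := by simp [lev, ht, hk]
  refine ⟨by rw [hl]; simp [lev], Or.inr ⟨Or.inl rfl, five_intr hφ hβ hsafe.here hv, ?_⟩⟩
  by_cases hinc : Inc L2 β σ
  · have hTB : M.R β σ.w σ.w ∨ M.R β v σ.w := by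
      rcases hinc with h' | h' | h'
      · exact absurd h' ht
      · exact Or.inl (hM β .T h' _)
      · exact Or.inr (hM β .B h' _ _ hv)
    have heq := five_equiv hφ hβ hsafe.here hv' hv hTB
    refine Or.inl ⟨hinc, fun ψ hψ => ?_, heq⟩
    rcases hTB with h' | h'
    · exact Bs_body hψ h'
    · exact Bs_body (heq ▸ hψ) h'
  · refine Or.inr ⟨hinc, by simp only; omega, fun ψ => ⟨fun hψ => ⟨v, hv, hψ⟩, ?_⟩,
      fun ψ hψ => Bs_body hψ hv, fun h4 ψ hψ => ?_⟩
    · rintro ⟨x, hx, hψ⟩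
      exact five_sibling hφ hβ hsafe.here hv' hx hv hψ
    · obtain ⟨h1, h2⟩ := mem_Bs.1 hψ
      exact mem_Bs.2 ⟨h1, fun y hy => h2 y (hM β .four h4 _ _ _ hv hy)⟩

theorem rel5_cluster (hφ : recFree φ) (hβ : β ∈ A) {σ' : Raw W Ag}
    (h : Valid5 M ρ A φ L2 σ) (h' : Valid5 M ρ A φ L2 σ') (ht : σ.tag = some β)
    (ht' : σ'.tag = some β) (hl : σ.l = σ'.l) (hB : Bs M ρ φ β σ.w = Bs M ρ φ β σ'.w) :
    rel5 M ρ φ L2 β σ σ' :=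
  ⟨by simp [lev, ht, ht', hl], Or.inr ⟨Or.inl ht', intr_tag hφ hβ h' ht',
    Or.inl ⟨Or.inl ht, intr_tag hφ hβ h ht, hB⟩⟩⟩

/-- Diamonds of a state inside a cluster are realised inside the cluster, at the cost of at most one
unit of budget; a successor of a successor of the entry point costs nothing further, because it can
borrow the successors of its predecessor. -/
theorem dia5_cluster (hφ : recFree φ) (hM : modelFor L2 M) (hβ : β ∈ A)
    (h : Valid5 M ρ A φ L2 σ) (ht : σ.tag = some β) (hk : 0 < σ.k)
    {χ : Formula Ag PVar LVar} (hχ : .dia β χ ∈ sub φ) (hd : σ.w ∈ sem M ρ (.dia β χ)) :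
    ∃ σ', Valid5 M ρ A φ L2 σ' ∧ rel5 M ρ φ L2 β σ σ' ∧ σ'.w ∈ sem M ρ χ ∧ σ.k ≤ σ'.k + 1 := by
  rcases h.2 β ht with ⟨e, he, hr, hl⟩ | ⟨-, hn, e, v, he, h1, h2, hl⟩
  · rw [hl] at he
    by_cases hn : .T ∈ L2 β ∨ .B ∈ L2 β ∨ .four ∈ L2 β
    -- the entry point `e` has a witness of its own, which is then a sibling
    · have hde : e ∈ sem M ρ (.dia β χ) := by
        rcases hn with hn | hn | hn
        · exact dia_congr hφ hχ (fun hh => five_equiv hφ hβ he.here h.1.here hr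
            (Or.inl (hM β .T hn _)) ▸ hh) hd
        · exact dia_congr hφ hχ (fun hh => five_equiv hφ hβ he.here h.1.here hr
            (Or.inr (hM β .B hn _ _ hr)) ▸ hh) hd
        · obtain ⟨x, hx, hx'⟩ := hd
          exact ⟨x, hM β .four hn _ _ _ hr hx, hx'⟩
      obtain ⟨x, hx, hx'⟩ := hde
      have hval : Valid5 M ρ A φ L2 ⟨x, σ.k, some β, σ.k + 1⟩ := valid5_succ he hx
      refine ⟨_, hval, rel5_cluster hφ hβ h hval ht rfl hl ?_, hx', by simp⟩
      exact Finset.Subset.antisymm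
        (five_sibling hφ hβ he.here hval.1.here hr hx)
        (five_sibling hφ hβ he.here h.1.here hx hr)
    · obtain ⟨x, hx, hx'⟩ := hd
      obtain ⟨k, hk'⟩ : ∃ k, σ.k = k + 1 := ⟨σ.k - 1, by omega⟩
      have hsw := h.1
      rw [hk'] at he hsw
      have hval : Valid5 M ρ A φ L2 ⟨x, k, some β, k + 2⟩ := by
        refine ⟨hsw.step hx, fun γ hγ => ?_⟩
        obtain rfl : β = γ := by simpa using hγ
        exact Or.inr ⟨hβ, hn, e, _, he, hr, hx, rfl⟩
      refine ⟨_, hval, rel5_cluster hφ hβ h hval ht rfl (by simp only; omega) ?_, hx',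
        by simp only; omega⟩
      exact five_succ hφ hβ he.here hsw.here hval.1.here hr hx
  · rw [hl] at he
    have hsv := he.step h1
    have heq := five_succ hφ hβ he.here hsv.here h.1.here h1 h2
    obtain ⟨x, hx, hx'⟩ := dia_congr (u := v) hφ hχ (fun hh => heq ▸ hh) hd
    have hval : Valid5 M ρ A φ L2 ⟨x, σ.k, some β, σ.k + 2⟩ := by
      refine ⟨hsv.step hx, fun γ hγ => ?_⟩
      obtain rfl : β = γ := by simpa using hγ
      exact Or.inr ⟨hβ, hn, e, v, he, h1, hx, rfl⟩
    refine ⟨_, hval, rel5_cluster hφ hβ h hval ht rfl hl ?_, hx', by simp⟩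
    rw [← heq]
    exact five_succ hφ hβ he.here hsv.here hval.1.here h1 hx

/-- Frame conditions of the relation of an agent in `A`. -/
theorem rel5_holds (hφ : recFree φ) (hM : modelFor L2 M) (hβ : β ∈ A) {c : FrameCond}
    (hc : c ∈ L2 β ∪ {.five}) :
    c.holds (fun σ σ' : {σ // Valid5 M ρ A φ L2 σ} => rel5 M ρ φ L2 β σ.1 σ'.1) := by
  cases c with
  | D =>
    have hc : .D ∈ L2 β := by simpa using hc
    intro σ
    rcases Nat.eq_zero_or_pos (lev β σ.1) with h | h
    · exact ⟨σ, rfl, Or.inl h⟩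
    by_cases ht : σ.1.tag = some β
    · exact ⟨σ, rel5_cluster hφ hβ σ.2 σ.2 ht ht rfl rfl⟩
    · rw [lev, if_neg ht] at h
      obtain ⟨k, hk⟩ : ∃ k, σ.1.k = k + 1 := ⟨σ.1.k - 1, by omega⟩
      obtain ⟨v, hv⟩ := hM β .D hc σ.1.w
      exact ⟨⟨_, valid5_succ (hk ▸ σ.2.1) hv⟩, rel5_root hφ hM hβ σ.2 ht hk hv⟩
  | T =>
    have hc : .T ∈ L2 β := by simpa using hc
    have hI : ∀ t, Intr M ρ φ β t := fun t ψ hψ => Bs_body hψ (hM β .T hc t)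
    exact fun σ => ⟨rfl, Or.inr ⟨Or.inr (Or.inl hc), hI _,
      Or.inl ⟨Or.inr (Or.inl hc), hI _, rfl⟩⟩⟩
  | B =>
    have hc : .B ∈ L2 β := by simpa using hc
    rintro σ σ' ⟨hl, h⟩
    refine ⟨hl.symm, ?_⟩
    rcases h with h | ⟨h1, h2, ⟨h3, h4, h5⟩ | ⟨h3, -⟩⟩
    · exact Or.inl (hl ▸ h)
    · exact Or.inr ⟨h3, h4, Or.inl ⟨h1, h2, h5.symm⟩⟩
    · exact absurd (Or.inr (Or.inr hc)) h3
  | four =>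
    have hc : .four ∈ L2 β := by simpa using hc
    rintro σ σ' σ'' ⟨hl, h⟩ ⟨hl', h'⟩
    refine ⟨hl.trans hl', ?_⟩
    rcases h with h | ⟨h1, h2, h3⟩
    · exact Or.inl h
    rcases h' with h' | ⟨h1', h2', h3' | h3'⟩
    · exact Or.inl (hl ▸ h')
    · refine Or.inr ⟨h1', h2', ?_⟩
      rcases h3 with ⟨g1, g2, g3⟩ | ⟨g1, g2, g3, g4, g5⟩
      · exact Or.inl ⟨g1, g2, g3.trans h3'.2.2⟩
      · have hle := (lev5 (β := β) σ''.2).2.2 (by tauto)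
        refine Or.inr ⟨g1, by omega, ?_, ?_, ?_⟩
        · rw [← h3'.2.2]; exact g3
        · exact fun ψ hψ => h2' ψ (h3'.2.2 ▸ g5 hc hψ)
        · rw [← h3'.2.2]; exact g5
    · exact absurd h1 h3'.1
  | five =>
    rintro σ σ' σ'' ⟨hl, h⟩ ⟨hl', h'⟩
    refine ⟨hl.symm.trans hl', ?_⟩
    rcases h with h | ⟨h1, h2, h3⟩
    · exact Or.inl (hl ▸ h)
    rcases h' with h' | ⟨h1', h2', h3'⟩
    · exact Or.inl (hl ▸ h')
    refine Or.inr ⟨h1', h2', Or.inl ⟨h1, h2, ?_⟩⟩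
    rcases h3 with ⟨g1, g2, g3⟩ | ⟨g1, g2, g3, g4, g5⟩
    · rcases h3' with h3' | h3'
      · exact g3.symm.trans h3'.2.2
      · exact absurd g1 h3'.1
    · rcases h3' with h3' | h3'
      · exact absurd h3'.1 g1
      · ext ψ
        rw [g3, h3'.2.2.1]

theorem rel5_box : BoxOK M ρ φ (fun σ : {σ // Valid5 M ρ A φ L2 σ} => σ.1.w) (fun σ => σ.1.k) β
    (fun σ σ' => rel5 M ρ φ L2 β σ.1 σ'.1) := by
  rintro χ σ σ' hχ hk hσ ⟨hl, h⟩
  have hk : md χ < σ.1.k := hk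
  have l1 := lev5 (β := β) σ.2
  have l2 := lev5 (β := β) σ'.2
  have hb := Bs_of_box hχ hσ
  show σ'.1.w ∈ _ ∧ md χ ≤ σ'.1.k
  rcases h with h | ⟨h1, h2, ⟨h3, h4, h5⟩ | ⟨h3, h4, h5, h6, h7⟩⟩
  · omega
  · rw [h5] at hb
    refine ⟨h2 (.box β χ) hb, ?_⟩
    rcases h3 with h3 | h3
    · have hlt : σ.1.k < lev β σ.1 := by
        rw [lev, if_pos h3]
        rcases σ.2.2 β h3 with ⟨e, -, -, he⟩ | ⟨-, -, e, v, -, -, -, he⟩ <;> omega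
      omega
    · have := l2.2.2 (by tauto)
      omega
  · exact ⟨h6 (.box β χ) hb, by omega⟩

theorem rel5_dia (hφ : recFree φ) (hM : modelFor L2 M) (hβ : β ∈ A) :
    DiaOK M ρ φ (fun σ : {σ // Valid5 M ρ A φ L2 σ} => σ.1.w) (fun σ => σ.1.k) β
    (fun σ σ' => rel5 M ρ φ L2 β σ.1 σ'.1) := by
  rintro χ σ hχ hk hσ
  have hk : md χ < σ.1.k := hk
  by_cases ht : σ.1.tag = some β
  · obtain ⟨σ', hv, hr, hx, hk'⟩ := dia5_cluster hφ hM hβ σ.2 ht (by omega) hχ hσ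
    exact ⟨⟨σ', hv⟩, hr, hx, show md χ ≤ σ'.k by omega⟩
  · obtain ⟨k, hk'⟩ : ∃ k, σ.1.k = k + 1 := ⟨σ.1.k - 1, by omega⟩
    obtain ⟨v, hv, hx⟩ := hσ
    exact ⟨⟨_, valid5_succ (hk' ▸ σ.2.1) hv⟩, rel5_root hφ hM hβ σ.2 ht hk' hv, hx,
      show md χ ≤ k by omega⟩

theorem relTrans_step (hM : modelFor L2 M) (hβ : β ∉ A) (h4 : .four ∈ L2 β)
    (h : Valid5 M ρ A φ L2 σ) (hl : 0 < lev β σ) {v : W} (hv : M.R β σ.w v) :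
    ∃ σ', Valid5 M ρ A φ L2 σ' ∧ σ'.w = v ∧ lev β σ = σ'.k + 1 ∧ relTrans M β σ σ' := by
  by_cases ht : σ.tag = some β
  · rcases h.2 β ht with ⟨e, he, hr, hl'⟩ | ⟨hA, -⟩
    · rw [hl'] at he
      refine ⟨⟨v, σ.k, some β, σ.k + 1⟩, valid5_succ he (hM β .four h4 _ _ _ hr hv), rfl, ?_, ?_,
        Or.inr hv⟩ <;> simp [lev, ht, hl']
    · exact absurd hA hβ
  · rw [lev, if_neg ht] at hl
    obtain ⟨k, hk⟩ : ∃ k, σ.k = k + 1 := ⟨σ.k - 1, by omega⟩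
    refine ⟨⟨v, k, some β, k + 1⟩, valid5_succ (hk ▸ h.1) hv, rfl, ?_, ?_, Or.inr hv⟩ <;>
      simp [lev, ht, hk]

theorem relTrans_holds (hM : modelFor L2 M) (hβ : β ∉ A) (h4 : .four ∈ L2 β) {c : FrameCond}
    (hc : c ∈ L2 β) (ho : ord c < 4) :
    c.holds (fun σ σ' : {σ // Valid5 M ρ A φ L2 σ} => relTrans M β σ.1 σ'.1) := by
  have hMc := hM β c hc
  cases c with
  | D =>
    intro σ
    rcases Nat.eq_zero_or_pos (lev β σ.1) with h | h
    · exact ⟨σ, rfl, Or.inl h⟩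
    · obtain ⟨v, hv⟩ := hMc σ.1.w
      obtain ⟨σ', hσ', -, -, hr⟩ := relTrans_step hM hβ h4 σ.2 h hv
      exact ⟨⟨σ', hσ'⟩, hr⟩
  | T => exact fun σ => ⟨rfl, Or.inr (hMc _)⟩
  | B =>
    rintro σ σ' ⟨hl, h⟩
    exact ⟨hl.symm, h.imp (fun h => hl ▸ h) (hMc _ _)⟩
  | four =>
    rintro σ σ' σ'' ⟨hl, h⟩ ⟨hl', h'⟩
    refine ⟨hl.trans hl', ?_⟩
    rcases h with h | h
    · exact Or.inl h
    · exact h'.imp (fun h' => hl ▸ h') (hMc _ _ _ h)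
  | five => simp [ord] at ho

theorem relTrans_box (hβ : β ∉ A) :
    BoxOK M ρ φ (fun σ : {σ // Valid5 M ρ A φ L2 σ} => σ.1.w) (fun σ => σ.1.k) β
    (fun σ σ' => relTrans M β σ.1 σ'.1) := by
  rintro χ σ σ' hχ hk hσ ⟨hl, h⟩
  have hk : md χ < σ.1.k := hk
  have l1 := lev5 (β := β) σ.2
  have l2 := (lev5 (β := β) σ'.2).2.2 (Or.inl hβ)
  rcases h with h | h
  · omega
  · exact ⟨hσ _ h, show md χ ≤ σ'.1.k by omega⟩

theorem relTrans_dia (hM : modelFor L2 M) (hβ : β ∉ A) (h4 : .four ∈ L2 β) :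
    DiaOK M ρ φ (fun σ : {σ // Valid5 M ρ A φ L2 σ} => σ.1.w) (fun σ => σ.1.k) β
    (fun σ σ' => relTrans M β σ.1 σ'.1) := by
  rintro χ σ hχ hk ⟨v, hv, hx⟩
  have hk : md χ < σ.1.k := hk
  have l1 := lev5 (β := β) σ.2
  obtain ⟨σ', hσ', rfl, hl, hr⟩ := relTrans_step hM hβ h4 σ.2 (by omega) hv
  exact ⟨⟨σ', hσ'⟩, hr, hx, show md χ ≤ σ'.k by omega⟩

open Classical in
theorem case_five {L1 : Ag → Set FrameCond} {s : W}
    (h1 : ∀ α ∈ A, L1 α = L2 α ∪ {.five}) (h2 : ∀ α ∉ A, L1 α = L2 α)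
    (hprec : ∀ α : Ag, ∀ c ∈ L2 α, ord c < ord .five) (hφ : recFree φ)
    (hM : modelFor L2 M) (hs : s ∈ sem M ρ φ)
    (hsafe : Safe M (AxAt M ρ .five A φ) (md φ) s) : Satisfiable L1 φ := by
  have hcs : CanStep M (fun σ : {σ // Valid5 M ρ A φ L2 σ} => σ.1.w) (fun σ => σ.1.k) := by
    rintro β ⟨⟨t, k, tag, l⟩, h⟩ u hk hu
    obtain ⟨k, rfl⟩ : ∃ n, k = n + 1 := ⟨k - 1, by simp at hk; omega⟩
    exact ⟨⟨⟨u, k, none, 0⟩, h.1.step hu, by simp⟩, rfl, rfl⟩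
  refine satisfiable_of_transfer (M := M) (ρ := ρ)
    (w := fun σ : {σ // Valid5 M ρ A φ L2 σ} => σ.1.w) (k := fun σ => σ.1.k) hφ
    (fun α => if α ∈ A then fun σ σ' => rel5 M ρ φ L2 α σ.1 σ'.1
      else if .four ∈ L2 α then fun σ σ' => relTrans M α σ.1 σ'.1
      else simpleRel M (fun σ => σ.1.w) (fun σ => σ.1.k) α) L1
    ?_ ?_ ?_ ⟨⟨s, md φ, none, 0⟩, hsafe, by simp⟩ le_rfl hs
  · intro α c hc
    by_cases hα : α ∈ A
    · rw [h1 α hα] at hc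
      simpa only [hα, if_true] using rel5_holds hφ hM hα hc
    · rw [h2 α hα] at hc
      by_cases h4 : .four ∈ L2 α
      · simpa only [hα, h4, if_true, if_false] using
          relTrans_holds hM hα h4 hc (hprec α c hc)
      · simp only [hα, h4, if_false]
        refine simple_holds hcs ?_ (hM α c hc)
        have := hprec α c hc
        cases c <;> simp_all [ord]
  · intro α
    by_cases hα : α ∈ A
    · simpa only [hα, if_true] using rel5_box
    · by_cases h4 : .four ∈ L2 α
      · simpa only [hα, h4, if_true, if_false] using relTrans_box hα
      · simpa only [hα, h4, if_false] using simple_box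
  · intro α
    by_cases hα : α ∈ A
    · simpa only [hα, if_true] using rel5_dia hφ hM hα
    · by_cases h4 : .four ∈ L2 α
      · simpa only [hα, h4, if_true, if_false] using relTrans_dia hM hα h4
      · simpa only [hα, h4, if_false] using simple_dia hcs

end Five

end Transfer

end Helpers

/-- correctness of the one-step translation for recursion-free formulas. -/
theorem stmt2 [Fintype Ag] [DecidableEq Ag] [DecidableEq PVar] [DecidableEq LVar]
    (x : FrameCond) (A : Finset Ag) (L1 L2 : Ag → Set FrameCond)
    (h1 : ∀ α ∈ A, L1 α = L2 α ∪ {x})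
    (h2 : ∀ α ∉ A, L1 α = L2 α)
    (hprec : ∀ α : Ag, ∀ c ∈ L2 α, ord c < ord x)
    (φ : Formula Ag PVar LVar) (hφ : recFree φ) :
    Satisfiable L1 φ ↔ Satisfiable L2 (translOneStep x A φ) := by
  constructor
  · rintro ⟨W, M, s, hM, hs⟩
    have hx : ∀ α ∈ A, x.holds (M.R α) := fun α hα => hM α x (by simp [h1 α hα])
    refine ⟨W, M, s, fun α c hc => hM α c ?_, fun ρ => ?_⟩
    · by_cases hα : α ∈ A
      · simp [h1 α hα, hc]
      · simpa [h2 α hα] using hc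
    · exact (sem_transl M ρ x A φ s).2 ⟨hs ρ, Safe.of_forall (axAt_of_holds hφ hx)⟩
  · rintro ⟨W, M, s, hM, hs⟩
    obtain ⟨hsφ, hsafe⟩ := (sem_transl M (fun _ => ∅) x A φ s).1 (hs _)
    cases x with
    | D => exact case_D h1 h2 hprec hφ hM hsφ (by simpa using hsafe)
    | T => exact case_T h1 h2 hprec hφ hM hsφ (by simpa using hsafe)
    | B => exact case_B h1 h2 hprec hφ hM hsφ (by simpa using hsafe)
    | four => exact case_four h1 h2 hprec hφ hM hsφ (by simpa using hsafe)
    | five => exact case_five h1 h2 hprec hφ hM hsφ (by simpa using hsafe)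
end

section
/- Let A ⊆ Ag, |Ag| = k, and let L be the logic with L(α) = {D} for α ∈ A and L(α) = ∅ otherwise. Then a closed formula φ is L-satisfiable if and only if φ ∧ Inv(⋀_{α∈A}⟨α⟩tt) is K^μ_k-satisfiable. -/
/-!
Seriality of the agents in `A` says that every state satisfies `⋀_{α ∈ A} ⟨α⟩tt`. In a model for
`L` the set of all states is therefore a post-fixed point of the operator defining the invariant,
which gives the forward direction (`mem_sem_invF`).

Conversely, if `Inv(⋀_{α ∈ A} ⟨α⟩tt)` holds at `s`, it is witnessed by a set `S ∋ s` that is closed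
under all accessibility relations and all of whose states have an `α`-successor for each `α ∈ A`.
Restricting the model to `S` yields a model for `L`, and by `sem_restrict` passing to a subset
closed under successors does not change the truth of any formula at its states.
-/

set_option linter.unusedVariables false

variable {Ag PVar LVar W : Type}

/-- The restriction of a Kripke model to a set of states. -/
def Kripke.restrict (M : Kripke Ag PVar W) (S : Set W) : Kripke Ag PVar S where
  R α s t := M.R α s t
  V s := M.V s

theorem mem_sem_listAnd [DecidableEq LVar] (M : Kripke Ag PVar W) (ρ : LVar → Set W)
    (l : List (Formula Ag PVar LVar)) (s : W) :
    s ∈ sem M ρ (listAnd l) ↔ ∀ φ ∈ l, s ∈ sem M ρ φ := by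
  induction l with
  | nil => simp [listAnd, sem]
  | cons φ l ih => simp [listAnd, sem, ih]

/-- A state satisfies `Inv(⋀_{α ∈ A} ⟨α⟩tt)` iff it lies in a successor-closed set in which every
state has an `α`-successor for each `α ∈ A`. -/
theorem mem_sem_invF [Fintype Ag] [DecidableEq LVar] (M : Kripke Ag PVar W) (ρ : LVar → Set W)
    (A : Finset Ag) (X : LVar) (s : W) :
    s ∈ sem M ρ (InvF X (listAnd (A.toList.map fun α => .dia α .tt))) ↔
      ∃ S : Set W, (∀ u ∈ S, (∀ α ∈ A, ∃ t, M.R α u t) ∧ ∀ α t, M.R α u t → t ∈ S) ∧ s ∈ S := by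
  simp [InvF, sem, mem_sem_listAnd, Set.subset_def]

theorem preimage_update [DecidableEq LVar] {S : Set W} (ρ : LVar → Set W) (X : LVar) (T : Set W) :
    (fun Y => (Subtype.val ⁻¹' (Function.update ρ X T Y) : Set S)) =
      Function.update (fun Y => Subtype.val ⁻¹' ρ Y) X (Subtype.val ⁻¹' T) := by
  funext Y
  by_cases h : Y = X
  · subst h; simp
  · simp [h]

/-- Truth of formulas is invariant under restriction to a successor-closed set of states. -/
theorem sem_restrict [DecidableEq LVar] (M : Kripke Ag PVar W) (S : Set W)
    (hS : ∀ u ∈ S, ∀ α t, M.R α u t → t ∈ S) (φ : Formula Ag PVar LVar) (ρ : LVar → Set W) :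
    sem (M.restrict S) (fun Y => Subtype.val ⁻¹' ρ Y) φ = Subtype.val ⁻¹' sem M ρ φ := by
  induction φ generalizing ρ with
  | prop p => rfl
  | nprop p => rfl
  | tt => rfl
  | ff => rfl
  | var X => rfl
  | and φ ψ ih₁ ih₂ => simp only [sem, ih₁, ih₂, Set.preimage_inter]
  | or φ ψ ih₁ ih₂ => simp only [sem, ih₁, ih₂, Set.preimage_union]
  | dia α φ ih =>
    ext ⟨u, hu⟩
    simp only [sem, ih, Set.mem_ofPred_eq, Set.mem_preimage]
    exact ⟨fun ⟨t, ht, h⟩ => ⟨t, ht, h⟩, fun ⟨t, ht, h⟩ => ⟨⟨t, hS u hu α t ht⟩, ht, h⟩⟩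
  | box α φ ih =>
    ext ⟨u, hu⟩
    simp only [sem, ih, Set.mem_ofPred_eq, Set.mem_preimage]
    exact ⟨fun h t ht => h ⟨t, hS u hu α t ht⟩ ht, fun h t ht => h t ht⟩
  | mu X φ ih =>
    ext u
    simp only [sem, Set.mem_sInter, Set.mem_ofPred_eq, Set.mem_preimage]
    constructor
    · intro h T hT
      refine h (Subtype.val ⁻¹' T) ?_
      rw [← preimage_update, ih]
      exact Set.preimage_mono hT
    · intro h T hT
      -- The largest set of states of `M` whose trace on `S` is `T` is a pre-fixed point.
      let T' : Set W := {w | ∀ hw : w ∈ S, (⟨w, hw⟩ : S) ∈ T}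
      have hT' : (Subtype.val ⁻¹' T' : Set S) = T := by
        ext v
        exact ⟨fun hv => hv v.2, fun hv _ => hv⟩
      refine h T' (fun w hw hwS => hT ?_) u.2
      rw [← hT', ← preimage_update, ih]
      exact hw
  | nu X φ ih =>
    ext u
    simp only [sem, Set.mem_sUnion, Set.mem_ofPred_eq, Set.mem_preimage]
    constructor
    · rintro ⟨T, hT, hu⟩
      refine ⟨Subtype.val '' T, ?_, u, hu, rfl⟩
      rintro _ ⟨v, hv, rfl⟩
      have hT' : (Subtype.val ⁻¹' (Subtype.val '' T) : Set S) = T :=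
        Set.preimage_image_eq T Subtype.val_injective
      have := hT hv
      rw [← hT', ← preimage_update, ih] at this
      exact this
    · rintro ⟨T, hT, hu⟩
      refine ⟨Subtype.val ⁻¹' T, ?_, hu⟩
      rw [← preimage_update, ih]
      exact Set.preimage_mono hT

/-- `φ` is `L`-satisfiable (where `L(α) = {D}` for `α ∈ A` and `∅` otherwise)
iff `φ ∧ Inv(⋀_{α ∈ A} ⟨α⟩tt)` is `K^μ_k`-satisfiable. -/
theorem stmt3 [Fintype Ag] [DecidableEq Ag] [DecidableEq LVar]
    (A : Finset Ag) (L : Ag → Set FrameCond)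
    (hL : ∀ α : Ag, L α = if α ∈ A then {FrameCond.D} else ∅)
    (φ : Formula Ag PVar LVar) (hφ : Closed φ) (X : LVar) :
    Satisfiable L φ ↔
      Satisfiable (fun _ : Ag => (∅ : Set FrameCond))
        (.and φ (InvF X (listAnd (A.toList.map fun α => .dia α .tt)))) := by
  constructor
  · rintro ⟨W, M, s, hM, hs⟩
    refine ⟨W, M, s, fun _ _ h => h.elim, fun ρ => ⟨hs ρ, ?_⟩⟩
    rw [mem_sem_invF]
    refine ⟨Set.univ, fun u _ => ⟨fun α hα => ?_, fun _ _ _ => trivial⟩, trivial⟩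
    exact hM α FrameCond.D (by simp [hL, hα]) u
  · rintro ⟨W, M, s, -, hs⟩
    obtain ⟨S, hS, hsS⟩ := (mem_sem_invF M (fun _ => ∅) A X s).1 (hs fun _ => ∅).2
    refine ⟨S, M.restrict S, ⟨s, hsS⟩, fun α c hc => ?_, fun ρ => ?_⟩
    · rw [hL] at hc
      split_ifs at hc with hα
      · obtain rfl : c = FrameCond.D := hc
        rintro ⟨u, hu⟩
        obtain ⟨t, ht⟩ := (hS u hu).1 α hα
        exact ⟨⟨t, (hS u hu).2 α t ht⟩, ht⟩
      · exact hc.elim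
    · -- Every environment on `S` is the trace of an environment on `W`.
      have hρ : ρ = fun Y => (Subtype.val ⁻¹' (Subtype.val '' ρ Y) : Set S) :=
        funext fun Y => (Set.preimage_image_eq (ρ Y) Subtype.val_injective).symm
      rw [hρ, sem_restrict M S (fun u hu => (hS u hu).2) φ (fun Y => Subtype.val '' ρ Y)]
      exact (hs _).1
end

section
/- Let ∅ ≠ A ⊆ Ag and let L1, L2 be logics such that L1(α) = L2(α) ∪ {T} for α ∈ A, L1(α) = L2(α) otherwise, and L2(α) ⊆ {D} for every α ∈ Ag. Define the translation τ by structural recursion: τ([α]ψ) = [α]τ(ψ) ∧ τ(ψ) and τ(⟨α⟩ψ) = ⟨α⟩τ(ψ) ∨ τ(ψ) for α ∈ A, and τ commutes with all other constructors (literals, variables, ∧, ∨, μ, ν, and modalities of agents not in A). Then a closed formula φ is L1-satisfiable if and only if τ(φ) is L2-satisfiable. -/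
/-!
Let `M⁺` be the model obtained from `M` by adding all reflexive `α`-loops for `α ∈ A`. The
translation spells out the effect of the added loops on the modalities, so `φ` has in `M⁺` the same
semantics as `τ(φ)` has in `M` (`sem_reflClosure`).

If `M` is a model for `L1`, then `M⁺ = M`, and `M` is a model for `L2` because `L2 α ⊆ L1 α`.
Conversely, if `M` is a model for `L2`, then `M⁺` is a model for `L1`: the loops give `T` for the
agents in `A`, and seriality, the only condition that `L2` may impose, survives enlarging the
relations.
-/

set_option linter.unusedVariables false

variable {Ag PVar LVar W : Type}

/-- The translation `τ` for reflexivity: `τ([α]ψ) = [α]τ(ψ) ∧ τ(ψ)` and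
`τ(⟨α⟩ψ) = ⟨α⟩τ(ψ) ∨ τ(ψ)` for `α ∈ A`; `τ` commutes with all other constructors. -/
def translT [DecidableEq Ag] (A : Finset Ag) :
    Formula Ag PVar LVar → Formula Ag PVar LVar
  | .box α φ =>
      if α ∈ A then .and (.box α (translT A φ)) (translT A φ)
      else .box α (translT A φ)
  | .dia α φ =>
      if α ∈ A then .or (.dia α (translT A φ)) (translT A φ)
      else .dia α (translT A φ)
  | .and φ ψ => .and (translT A φ) (translT A ψ)
  | .or φ ψ  => .or (translT A φ) (translT A ψ)
  | .mu X φ  => .mu X (translT A φ)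
  | .nu X φ  => .nu X (translT A φ)
  | .prop p  => .prop p
  | .nprop p => .nprop p
  | .tt      => .tt
  | .ff      => .ff
  | .var X   => .var X

/-- The model obtained from `M` by replacing `R_α` with its reflexive closure for each `α ∈ A`. -/
def reflClosure (A : Finset Ag) (M : Kripke Ag PVar W) : Kripke Ag PVar W where
  R α s t := M.R α s t ∨ (α ∈ A ∧ s = t)
  V := M.V

lemma reflClosure_R (A : Finset Ag) (M : Kripke Ag PVar W) (α : Ag) (s t : W) :
    (reflClosure A M).R α s t ↔ M.R α s t ∨ (α ∈ A ∧ s = t) :=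
  Iff.rfl

lemma sem_reflClosure [DecidableEq Ag] [DecidableEq LVar] (A : Finset Ag) (M : Kripke Ag PVar W)
    (φ : Formula Ag PVar LVar) (ρ : LVar → Set W) :
    sem (reflClosure A M) ρ φ = sem M ρ (translT A φ) := by
  induction φ generalizing ρ with
  | prop p => rfl
  | nprop p => rfl
  | tt => rfl
  | ff => rfl
  | var X => rfl
  | and φ ψ ihφ ihψ => simp only [sem, translT, ihφ, ihψ]
  | or φ ψ ihφ ihψ => simp only [sem, translT, ihφ, ihψ]
  | mu X φ ih => simp only [sem, translT, ih]
  | nu X φ ih => simp only [sem, translT, ih]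
  | dia α φ ih =>
    ext s
    by_cases hα : α ∈ A
    · simp [sem, translT, hα, ih, reflClosure_R, or_and_right, exists_or]
    · simp [sem, translT, hα, ih, reflClosure_R]
  | box α φ ih =>
    ext s
    by_cases hα : α ∈ A
    · simp [sem, translT, hα, ih, reflClosure_R, or_imp, forall_and]
    · simp [sem, translT, hα, ih, reflClosure_R]

lemma reflClosure_eq_self (A : Finset Ag) (M : Kripke Ag PVar W)
    (hM : ∀ α ∈ A, ∀ s, M.R α s s) : reflClosure A M = M := by
  have hR : (reflClosure A M).R = M.R := by
    funext α s t
    refine propext ⟨?_, Or.inl⟩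
    rintro (h | ⟨hα, rfl⟩)
    · exact h
    · exact hM α hα s
  cases M
  exact congrArg (Kripke.mk · _) hR

/-- correctness of the translation for reflexivity (`T`). -/
theorem stmt4 [DecidableEq Ag] [DecidableEq LVar]
    (A : Finset Ag) (hA : A.Nonempty) (L1 L2 : Ag → Set FrameCond)
    (h1 : ∀ α ∈ A, L1 α = L2 α ∪ {FrameCond.T})
    (h2 : ∀ α ∉ A, L1 α = L2 α)
    (hL2 : ∀ α : Ag, L2 α ⊆ {FrameCond.D})
    (φ : Formula Ag PVar LVar) (hφ : Closed φ) :
    Satisfiable L1 φ ↔ Satisfiable L2 (translT A φ) := by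
  constructor
  · rintro ⟨W, M, s, hM, hs⟩
    refine ⟨W, M, s, fun α c hc => hM α c ?_, fun ρ => ?_⟩
    · by_cases hα : α ∈ A
      · rw [h1 α hα]
        exact Or.inl hc
      · rwa [h2 α hα]
    · rw [← sem_reflClosure, reflClosure_eq_self]
      · exact hs ρ
      · intro α hα
        exact hM α .T (by rw [h1 α hα]; exact Or.inr rfl)
  · rintro ⟨W, M, s, hM, hs⟩
    have hL2' : ∀ α, ∀ c ∈ L2 α, c.holds ((reflClosure A M).R α) := by
      intro α c hc
      obtain rfl : c = .D := hL2 α hc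
      intro w
      obtain ⟨t, ht⟩ := hM α .D hc w
      exact ⟨t, Or.inl ht⟩
    refine ⟨W, reflClosure A M, s, fun α c hc => ?_, fun ρ => ?_⟩
    · by_cases hα : α ∈ A
      · rw [h1 α hα] at hc
        rcases hc with hc | rfl
        · exact hL2' α c hc
        · exact fun w => Or.inr ⟨hα, rfl⟩
      · rw [h2 α hα] at hc
        exact hL2' α c hc
    · rw [sem_reflClosure]
      exact hs ρ
end

section
/- Let ∅ ≠ A ⊆ Ag and let L1, L2 be logics such that L1(α) = L2(α) ∪ {4} for α ∈ A, L1(α) = L2(α) otherwise, and L2(α) ⊆ {D,T,B} for every α ∈ Ag. Define the translation τ by structural recursion: τ([α]ψ) = νX.([α]τ(ψ) ∧ [α]X) and τ(⟨α⟩ψ) = μX.(⟨α⟩τ(ψ) ∨ ⟨α⟩X) for α ∈ A (with X a fresh variable in each case), and τ commutes with all other constructors (literals, variables, ∧, ∨, μ, ν, and modalities of agents not in A). Then a closed formula φ is L1-satisfiable if and only if τ(φ) is L2-satisfiable. -/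
/-!
The translation replaces, for `α ∈ A`, the modalities of `R_α` by those of its transitive closure
`R_α⁺`: the fixed points `νX.([α]ψ ∧ [α]X)` and `μX.(⟨α⟩ψ ∨ ⟨α⟩X)` say that `ψ` holds at all,
respectively some, states reachable in at least one `α`-step (`sem_nu_box`, `sem_mu_dia`).
By induction on `φ`, evaluating `τ(φ)` in `M` is therefore the same as evaluating `φ` in the model
`M⁺` obtained by closing `R_α` transitively for each `α ∈ A` (`sem_transl4`).

If `M` is a model for `L1`, these relations are already transitive, so `M⁺ = M`, and `M` is also a
model for `L2`. Conversely, seriality, reflexivity and symmetry pass to the transitive closure, so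
`M⁺` is a model for `L1` whenever `M` is a model for `L2`.
-/

set_option linter.unusedVariables false

variable {Ag PVar LVar W : Type}

/-- The translation `τ` for transitivity: `τ([α]ψ) = νX.([α]τ(ψ) ∧ [α]X)` and
`τ(⟨α⟩ψ) = μX.(⟨α⟩τ(ψ) ∨ ⟨α⟩X)` for `α ∈ A`, with `X` a fresh variable
(chosen by a fresh-variable function `fresh`); `τ` commutes with all other
constructors. -/
def transl4 [DecidableEq Ag] (A : Finset Ag)
    (fresh : Formula Ag PVar LVar → LVar) :
    Formula Ag PVar LVar → Formula Ag PVar LVar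
  | .box α φ =>
      let t := transl4 A fresh φ
      if α ∈ A then .nu (fresh t) (.and (.box α t) (.box α (.var (fresh t))))
      else .box α t
  | .dia α φ =>
      let t := transl4 A fresh φ
      if α ∈ A then .mu (fresh t) (.or (.dia α t) (.dia α (.var (fresh t))))
      else .dia α t
  | .and φ ψ => .and (transl4 A fresh φ) (transl4 A fresh ψ)
  | .or φ ψ  => .or (transl4 A fresh φ) (transl4 A fresh ψ)
  | .mu X φ  => .mu X (transl4 A fresh φ)
  | .nu X φ  => .nu X (transl4 A fresh φ)
  | .prop p  => .prop p
  | .nprop p => .nprop p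
  | .tt      => .tt
  | .ff      => .ff
  | .var X   => .var X

/-- The model obtained from `M` by replacing `R_α` by its transitive closure for every `α ∈ A`. -/
def Kripke.closure [DecidableEq Ag] (A : Finset Ag) (M : Kripke Ag PVar W) :
    Kripke Ag PVar W where
  R α := if α ∈ A then Relation.TransGen (M.R α) else M.R α
  V := M.V

/-- The semantics depends only on the values of the environment at variables of the formula. -/
theorem sem_congr [DecidableEq LVar] (M : Kripke Ag PVar W) (φ : Formula Ag PVar LVar) :
    ∀ ρ ρ' : LVar → Set W, (∀ X ∈ vars φ, ρ X = ρ' X) → sem M ρ φ = sem M ρ' φ := by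
  have upd : ∀ (Y : LVar) (ψ : Formula Ag PVar LVar) (ρ ρ' : LVar → Set W) (S : Set W),
      (∀ X ∈ insert Y (vars ψ), ρ X = ρ' X) →
      ∀ X ∈ vars ψ, Function.update ρ Y S X = Function.update ρ' Y S X := by
    intro Y ψ ρ ρ' S h X hX
    by_cases hXY : X = Y
    · subst hXY; simp
    · simp [hXY, h X (Set.mem_insert_of_mem _ hX)]
  induction φ with
  | prop p => intros; rfl
  | nprop p => intros; rfl
  | tt => intros; rfl
  | ff => intros; rfl
  | var X => intro ρ ρ' h; exact h X rfl
  | and φ ψ ih1 ih2 =>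
    intro ρ ρ' h
    simp only [sem]
    rw [ih1 ρ ρ' fun X hX => h X (Or.inl hX), ih2 ρ ρ' fun X hX => h X (Or.inr hX)]
  | or φ ψ ih1 ih2 =>
    intro ρ ρ' h
    simp only [sem]
    rw [ih1 ρ ρ' fun X hX => h X (Or.inl hX), ih2 ρ ρ' fun X hX => h X (Or.inr hX)]
  | dia α φ ih => intro ρ ρ' h; simp only [sem]; rw [ih ρ ρ' h]
  | box α φ ih => intro ρ ρ' h; simp only [sem]; rw [ih ρ ρ' h]
  | mu Y φ ih =>
    intro ρ ρ' h
    have e := fun S => ih _ _ (upd Y φ ρ ρ' S h)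
    simp only [sem, e]
  | nu Y φ ih =>
    intro ρ ρ' h
    have e := fun S => ih _ _ (upd Y φ ρ ρ' S h)
    simp only [sem, e]

theorem sem_update [DecidableEq LVar] (M : Kripke Ag PVar W) (t : Formula Ag PVar LVar)
    (ρ : LVar → Set W) {X : LVar} (hX : X ∉ vars t) (S : Set W) :
    sem M (Function.update ρ X S) t = sem M ρ t :=
  sem_congr M t _ _ fun Y hY => Function.update_of_ne (by rintro rfl; exact hX hY) _ _

theorem sem_nu_box [DecidableEq LVar] (M : Kripke Ag PVar W) (α : Ag) (t : Formula Ag PVar LVar)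
    (ρ : LVar → Set W) {X : LVar} (hX : X ∉ vars t) :
    sem M ρ (.nu X (.and (.box α t) (.box α (.var X)))) =
      {s | ∀ u, Relation.TransGen (M.R α) s u → u ∈ sem M ρ t} := by
  simp only [sem, sem_update M t ρ hX, Function.update_self]
  apply Set.Subset.antisymm
  · rintro s ⟨S, hS, hs⟩ u hu
    induction hu using Relation.TransGen.head_induction_on with
    | single h => exact (hS hs).1 _ h
    | head h _ ih => exact ih ((hS hs).2 _ h)
  · intro s hs
    refine ⟨_, ?_, hs⟩
    intro v hv
    exact ⟨fun u hu => hv u (.single hu), fun u hu w hw => hv w (.head hu hw)⟩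

theorem sem_mu_dia [DecidableEq LVar] (M : Kripke Ag PVar W) (α : Ag) (t : Formula Ag PVar LVar)
    (ρ : LVar → Set W) {X : LVar} (hX : X ∉ vars t) :
    sem M ρ (.mu X (.or (.dia α t) (.dia α (.var X)))) =
      {s | ∃ u, Relation.TransGen (M.R α) s u ∧ u ∈ sem M ρ t} := by
  simp only [sem, sem_update M t ρ hX, Function.update_self]
  apply Set.Subset.antisymm
  · apply Set.sInter_subset_of_mem
    rintro s (⟨u, hu, hut⟩ | ⟨u, hu, w, hw, hwt⟩)
    · exact ⟨u, .single hu, hut⟩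
    · exact ⟨w, .head hu hw, hwt⟩
  · rintro s ⟨u, hu, hut⟩ S hS
    induction hu using Relation.TransGen.head_induction_on with
    | single h => exact hS (Or.inl ⟨_, h, hut⟩)
    | head h _ ih => exact hS (Or.inr ⟨_, h, ih⟩)

/-- Evaluating the translation in `M` amounts to evaluating the original formula in the model whose
`A`-relations have been closed transitively. -/
theorem sem_transl4 [DecidableEq Ag] [DecidableEq LVar] (A : Finset Ag)
    (fresh : Formula Ag PVar LVar → LVar)
    (hfresh : ∀ ψ : Formula Ag PVar LVar, fresh ψ ∉ vars ψ)
    (M : Kripke Ag PVar W) (φ : Formula Ag PVar LVar) :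
    ∀ ρ : LVar → Set W, sem M ρ (transl4 A fresh φ) = sem (M.closure A) ρ φ := by
  induction φ with
  | prop p => intro ρ; rfl
  | nprop p => intro ρ; rfl
  | tt => intro ρ; rfl
  | ff => intro ρ; rfl
  | var X => intro ρ; rfl
  | and φ ψ ih1 ih2 => intro ρ; simp only [transl4, sem, ih1, ih2]
  | or φ ψ ih1 ih2 => intro ρ; simp only [transl4, sem, ih1, ih2]
  | dia α φ ih =>
    intro ρ
    by_cases hα : α ∈ A
    · simp only [transl4, hα, if_true]
      rw [sem_mu_dia M α _ ρ (hfresh _)]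
      simp only [sem, Kripke.closure, hα, if_true, ih]
    · simp only [transl4, sem, Kripke.closure, hα, if_false, ih]
  | box α φ ih =>
    intro ρ
    by_cases hα : α ∈ A
    · simp only [transl4, hα, if_true]
      rw [sem_nu_box M α _ ρ (hfresh _)]
      simp only [sem, Kripke.closure, hα, if_true, ih]
    · simp only [transl4, sem, Kripke.closure, hα, if_false, ih]
  | mu Y φ ih => intro ρ; simp only [transl4, sem, ih]
  | nu Y φ ih => intro ρ; simp only [transl4, sem, ih]

theorem closure_eq_self [DecidableEq Ag] (A : Finset Ag) (M : Kripke Ag PVar W)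
    (h : ∀ α ∈ A, FrameCond.four.holds (M.R α)) : M.closure A = M := by
  obtain ⟨R, V⟩ := M
  simp only [Kripke.closure, Kripke.mk.injEq, and_true]
  funext α
  split_ifs with hα
  · have : IsTrans W (R α) := ⟨h α hα⟩
    exact Relation.transGen_eq_self
  · rfl

/-- Seriality, reflexivity and symmetry are inherited by the transitive closure. -/
theorem holds_transGen {R : W → W → Prop} {c : FrameCond}
    (hc : c ∈ ({FrameCond.D, FrameCond.T, FrameCond.B} : Set FrameCond)) (h : c.holds R) :
    c.holds (Relation.TransGen R) := by
  rcases hc with rfl | rfl | rfl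
  · intro s
    obtain ⟨t, ht⟩ := h s
    exact ⟨t, .single ht⟩
  · exact fun s => .single (h s)
  · intro s t hst
    induction hst with
    | single hs => exact .single (h _ _ hs)
    | tail _ hs ih => exact .head (h _ _ hs) ih

/-- correctness of the translation for transitivity (`4`). -/
theorem stmt5 [DecidableEq Ag] [DecidableEq LVar]
    (A : Finset Ag) (hA : A.Nonempty) (L1 L2 : Ag → Set FrameCond)
    (h1 : ∀ α ∈ A, L1 α = L2 α ∪ {FrameCond.four})
    (h2 : ∀ α ∉ A, L1 α = L2 α)
    (hL2 : ∀ α : Ag, L2 α ⊆ {FrameCond.D, FrameCond.T, FrameCond.B})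
    (fresh : Formula Ag PVar LVar → LVar)
    (hfresh : ∀ ψ : Formula Ag PVar LVar, fresh ψ ∉ vars ψ)
    (φ : Formula Ag PVar LVar) (hφ : Closed φ) :
    Satisfiable L1 φ ↔ Satisfiable L2 (transl4 A fresh φ) := by
  constructor
  · rintro ⟨W, M, s, hM, hs⟩
    refine ⟨W, M, s, ?_, fun ρ => ?_⟩
    · intro α c hc
      by_cases hα : α ∈ A
      · exact hM α c (by rw [h1 α hα]; exact Or.inl hc)
      · exact hM α c (by rw [h2 α hα]; exact hc)
    · rw [sem_transl4 A fresh hfresh, closure_eq_self A M]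
      · exact hs ρ
      · exact fun α hα => hM α _ (by rw [h1 α hα]; exact Or.inr rfl)
  · rintro ⟨W, M, s, hM, hs⟩
    refine ⟨W, M.closure A, s, ?_, fun ρ => ?_⟩
    · intro α c hc
      by_cases hα : α ∈ A
      · simp only [Kripke.closure, hα, if_true]
        rw [h1 α hα] at hc
        rcases hc with hc | rfl
        · exact holds_transGen (hL2 α hc) (hM α c hc)
        · exact fun _ _ _ => Relation.TransGen.trans
      · simp only [Kripke.closure, hα, if_false]
        exact hM α c (h2 α hα ▸ hc)
    · rw [← sem_transl4 A fresh hfresh]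
      exact hs ρ
end
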